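/- Let δ > 0 and let u be an admissible map. If 0 < ‖u‖ < r(δ), then D_δ(u) > 0. In particular, if 0 < ‖u‖ < r(1) then D(u) > 0. -/

import Mathlib

open MeasureTheory Real Filter

/-- x-partial derivative of a map `u : ℝ² → ℝ³`. -/
noncomputable def pderivX (u : ℝ × ℝ → Fin 3 → ℝ) (p : ℝ × ℝ) : Fin 3 → ℝ :=
  fderiv ℝ u p (1, 0)

/-- y-partial derivative of a map `u : ℝ² → ℝ³`. -/
noncomputable def pderivY (u : ℝ × ℝ → Fin 3 → ℝ) (p : ℝ × ℝ) : Fin 3 → ℝ :=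
  fderiv ℝ u p (0, 1)

/-- Euclidean dot product on `ℝ³`. -/
def dot3 (a b : Fin 3 → ℝ) : ℝ := ∑ i, a i * b i

/-- Squared Dirichlet norm `‖u‖² = ∫_Ω |∇u|²`. -/
noncomputable def dirEnergy (Ω : Set (ℝ × ℝ)) (u : ℝ × ℝ → Fin 3 → ℝ) : ℝ :=
  ∫ p in Ω, (dot3 (pderivX u p) (pderivX u p) + dot3 (pderivY u p) (pderivY u p))

/-- Dirichlet norm `‖u‖`. -/
noncomputable def dnorm (Ω : Set (ℝ × ℝ)) (u : ℝ × ℝ → Fin 3 → ℝ) : ℝ :=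
  Real.sqrt (dirEnergy Ω u)

/-- Volume functional `V(u) = ∫_Ω u · (u_x ∧ u_y)`. -/
noncomputable def vol (Ω : Set (ℝ × ℝ)) (u : ℝ × ℝ → Fin 3 → ℝ) : ℝ :=
  ∫ p in Ω, dot3 (u p) (crossProduct (pderivX u p) (pderivY u p))

/-- An admissible map: smooth with compact support contained in `Ω`. -/
def IsAdmissible (Ω : Set (ℝ × ℝ)) (u : ℝ × ℝ → Fin 3 → ℝ) : Prop :=
  ContDiff ℝ (⊤ : ℕ∞) u ∧ HasCompactSupport u ∧ tsupport u ⊆ Ω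

/-- Energy functional `E(u) = (1/2)‖u‖² + (2H/3)·V(u)`. -/
noncomputable def Efun (Ω : Set (ℝ × ℝ)) (H : ℝ) (u : ℝ × ℝ → Fin 3 → ℝ) : ℝ :=
  (1 / 2) * dirEnergy Ω u + (2 * H / 3) * vol Ω u

/-- Modified Nehari functional `D_δ(u) = δ‖u‖² + 2H·V(u)`; `D = D₁`. -/
noncomputable def Dfun (Ω : Set (ℝ × ℝ)) (H δ : ℝ) (u : ℝ × ℝ → Fin 3 → ℝ) : ℝ :=
  δ * dirEnergy Ω u + 2 * H * vol Ω u

/-- The radius `r(δ) = 2√(2π)·δ/H`. -/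
noncomputable def rPW (H δ : ℝ) : ℝ := 2 * Real.sqrt (2 * Real.pi) * δ / H

/-- The coefficient `a(δ) = 1/2 − δ/3`. -/
noncomputable def aPW (δ : ℝ) : ℝ := 1 / 2 - δ / 3

/-!
By Stokes' theorem the cone over `u` with apex at the origin, covered with multiplicity, gives an
integer-valued function of bounded variation on `ℝ³` whose distributional gradient is minus the
push-forward by `u` of the area normal `N = u_x ∧ u_y`. It integrates to `(1 / 3) ∫ u · N`, and
`|deg| ≤ |deg| ^ (3 / 2)` because it is an integer. The sharp Sobolev inequality in `BV(ℝ³)`, which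
follows from the isoperimetric inequality (Prékopa–Leindler implies Brunn–Minkowski) by slicing
into level sets, then yields the isoperimetric inequality `4π (∫ u · N)² ≤ (∫ |N|)³`. Finally
`|a ∧ b| ≤ (|a|² + |b|²) / 2` turns it into `32π V(u)² ≤ ‖u‖⁶`, and the constant `2√(2π)` in `r(δ)`
is exactly the one for which this makes `2H |V(u)|` smaller than `δ‖u‖²`.
-/

open Set Module
open scoped ENNReal NNReal Pointwise Topology

section PrekopaLeindler

theorem volume_add_volume_le_volume_of_isCompact {A B C : Set ℝ} (hA : IsCompact A)
    (hB : IsCompact B) (hA₀ : A.Nonempty) (hB₀ : B.Nonempty) (hC : A + B ⊆ C) :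
    volume A + volume B ≤ volume C := by
  obtain ⟨a, ha, ha_max⟩ := hA.exists_isGreatest hA₀
  obtain ⟨b, hb, hb_min⟩ := hB.exists_isLeast hB₀
  -- The translates `b +ᵥ A` and `a +ᵥ B` lie in `C` and meet only at `a + b`.
  have h_inter : (b +ᵥ A) ∩ (a +ᵥ B) ⊆ {a + b} := by
    rintro _ ⟨⟨x, hx, rfl⟩, y, hy, hxy⟩
    have hx' := ha_max hx
    have hy' := hb_min hy
    simp only [vadd_eq_add, mem_singleton_iff] at hxy ⊢
    linarith
  have h_disj : AEDisjoint volume (b +ᵥ A) (a +ᵥ B) :=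
    measure_mono_null h_inter Real.volume_singleton
  have h_union : (b +ᵥ A) ∪ (a +ᵥ B) ⊆ C := by
    rintro _ (⟨x, hx, rfl⟩ | ⟨y, hy, rfl⟩)
    · exact hC ⟨x, hx, b, hb, add_comm x b⟩
    · exact hC ⟨a, ha, y, hy, rfl⟩
  calc volume A + volume B = volume (b +ᵥ A) + volume (a +ᵥ B) := by
        rw [measure_vadd, measure_vadd]
    _ = volume ((b +ᵥ A) ∪ (a +ᵥ B)) :=
        (measure_union₀ (hB.vadd a).measurableSet.nullMeasurableSet h_disj).symm
    _ ≤ volume C := measure_mono h_union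

theorem volume_add_volume_le_volume_of_add_subset {A B C : Set ℝ} (hA : MeasurableSet A)
    (hB : MeasurableSet B) (hA₀ : A.Nonempty) (hB₀ : B.Nonempty) (hC : A + B ⊆ C) :
    volume A + volume B ≤ volume C := by
  obtain ⟨a, ha⟩ := hA₀
  obtain ⟨b, hb⟩ := hB₀
  rw [hA.measure_eq_iSup_isCompact volume, hB.measure_eq_iSup_isCompact volume]
  simp only [iSup_and']
  refine ENNReal.biSup_add_biSup_le' (p := fun K ↦ K ⊆ A ∧ IsCompact K)
    (q := fun K ↦ K ⊆ B ∧ IsCompact K) ⟨∅, empty_subset A, isCompact_empty⟩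
    ⟨∅, empty_subset B, isCompact_empty⟩ fun K ⟨hKA, hK⟩ L ⟨hLB, hL⟩ ↦ ?_
  calc volume K + volume L ≤ volume (insert a K) + volume (insert b L) := by
        gcongr <;> exact subset_insert _ _
    _ ≤ volume C := volume_add_volume_le_volume_of_isCompact (hK.insert a) (hL.insert b)
        (insert_nonempty a K) (insert_nonempty b L)
        ((add_subset_add (insert_subset ha hKA) (insert_subset hb hLB)).trans hC)

theorem lintegral_eq_lintegral_measure_ofReal_lt {α : Type*} [MeasurableSpace α] (μ : Measure α)
    [SFinite μ] {f : α → ℝ≥0∞} (hf : Measurable f) :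
    ∫⁻ x, f x ∂μ = ∫⁻ t in Ioi (0 : ℝ), μ {x | ENNReal.ofReal t < f x} := by
  have h_meas : MeasurableSet {p : α × ℝ | ENNReal.ofReal p.2 < f p.1} :=
    measurableSet_lt (by fun_prop) (by fun_prop)
  have h_slice (c : ℝ≥0∞) : volume.restrict (Ioi (0 : ℝ)) {t | ENNReal.ofReal t < c} = c := by
    rw [Measure.restrict_apply (measurableSet_lt (by fun_prop) measurable_const)]
    rcases eq_or_ne c ∞ with rfl | hc
    · simp
    · have : {t | ENNReal.ofReal t < c} ∩ Ioi 0 = Ioo 0 c.toReal := by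
        ext t
        simp only [mem_inter_iff, mem_ofPred_eq, mem_Ioi, mem_Ioo, and_comm (a := 0 < t)]
        exact and_congr_left fun ht ↦ ENNReal.ofReal_lt_iff_lt_toReal ht.le hc
      simp [this, hc]
  calc ∫⁻ x, f x ∂μ
      = ∫⁻ x, volume.restrict (Ioi (0 : ℝ)) {t | ENNReal.ofReal t < f x} ∂μ := by simp_rw [h_slice]
    _ = μ.prod (volume.restrict (Ioi 0)) {p | ENNReal.ofReal p.2 < f p.1} :=
        (Measure.prod_apply h_meas).symm
    _ = ∫⁻ t in Ioi (0 : ℝ), μ {x | ENNReal.ofReal t < f x} := Measure.prod_apply_symm h_meas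

theorem measurable_measure_ofReal_lt {α : Type*} [MeasurableSpace α] (μ : Measure α)
    (f : α → ℝ≥0∞) : Measurable fun t : ℝ ↦ μ {x | ENNReal.ofReal t < f x} :=
  Antitone.measurable fun _ _ hst ↦
    measure_mono fun _ hx ↦ (ENNReal.ofReal_le_ofReal hst).trans_lt hx

variable {E F : Type*} [AddCommGroup E] [Module ℝ E] [MeasurableSpace E]
  [AddCommGroup F] [Module ℝ F] [MeasurableSpace F]

/-- The Prékopa–Leindler inequality for the measure `μ`: if `h` dominates the weighted geometric
means of `f` and `g` at convex combinations, then so do the integrals. -/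
def IsPrekopaLeindler (μ : Measure E) : Prop :=
  ∀ ⦃a b : ℝ⦄, 0 < a → 0 < b → a + b = 1 → ∀ ⦃f g h : E → ℝ≥0∞⦄, Measurable f → Measurable g →
    Measurable h → (∀ x y, f x ^ a * g y ^ b ≤ h (a • x + b • y)) →
    (∫⁻ x, f x ∂μ) ^ a * (∫⁻ x, g x ∂μ) ^ b ≤ ∫⁻ x, h x ∂μ

theorem ennreal_geom_mean_le_arith_mean2_weighted {a b : ℝ} (ha : 0 < a) (hb : 0 < b)
    (hab : a + b = 1) (x y : ℝ≥0∞) :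
    x ^ a * y ^ b ≤ ENNReal.ofReal a * x + ENNReal.ofReal b * y := by
  have h_conj : a⁻¹.HolderConjugate b⁻¹ :=
    Real.holderConjugate_iff.2 ⟨(one_lt_inv₀ ha).2 (by linarith), by simpa using hab⟩
  have h_young := ENNReal.young_inequality (x ^ a) (y ^ b) h_conj
  rwa [ENNReal.rpow_rpow_inv ha.ne', ENNReal.rpow_rpow_inv hb.ne', ENNReal.ofReal_inv_of_pos ha,
    ENNReal.ofReal_inv_of_pos hb, div_eq_mul_inv, div_eq_mul_inv, inv_inv, inv_inv,
    mul_comm x, mul_comm y] at h_young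

variable {a b : ℝ} {f g h : ℝ → ℝ≥0∞}

theorem prekopaLeindler_real_of_iSup_eq_one (ha : 0 < a) (hb : 0 < b) (hab : a + b = 1)
    (hf : Measurable f) (hg : Measurable g) (hh : Measurable h)
    (hfgh : ∀ x y, f x ^ a * g y ^ b ≤ h (a • x + b • y)) (hf₁ : ⨆ x, f x = 1)
    (hg₁ : ⨆ x, g x = 1) :
    (∫⁻ x, f x) ^ a * (∫⁻ x, g x) ^ b ≤ ∫⁻ x, h x := by
  have h_level (t : ℝ) (ht : 0 < t) :
      ENNReal.ofReal a * volume {x | ENNReal.ofReal t < f x} +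
        ENNReal.ofReal b * volume {x | ENNReal.ofReal t < g x} ≤
      volume {x | ENNReal.ofReal t < h x} := by
    rcases lt_or_ge (ENNReal.ofReal t) 1 with ht₁ | ht₁
    · have h_nonempty {k : ℝ → ℝ≥0∞} (hk : ⨆ x, k x = 1) : {x | ENNReal.ofReal t < k x}.Nonempty :=
        let ⟨x, hx⟩ := lt_iSup_iff.1 (hk ▸ ht₁)
        ⟨x, hx⟩
      have h_smul {c : ℝ} (hc : 0 < c) (A : Set ℝ) :
          ENNReal.ofReal c * volume A = volume (c • A) := by
        simp [Measure.addHaar_smul, abs_of_pos hc]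
      rw [h_smul ha, h_smul hb]
      refine volume_add_volume_le_volume_of_add_subset
        ((measurableSet_lt measurable_const hf).const_smul_of_ne_zero ha.ne')
        ((measurableSet_lt measurable_const hg).const_smul_of_ne_zero hb.ne')
        (h_nonempty hf₁).smul_set (h_nonempty hg₁).smul_set ?_
      rintro _ ⟨_, ⟨x, hx, rfl⟩, _, ⟨y, hy, rfl⟩, rfl⟩
      calc ENNReal.ofReal t = ENNReal.ofReal t ^ a * ENNReal.ofReal t ^ b := by
            rw [← ENNReal.rpow_add _ _ (by simpa using ht) (by simp), hab, ENNReal.rpow_one]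
        _ < f x ^ a * g y ^ b :=
            ENNReal.mul_lt_mul (ENNReal.rpow_lt_rpow hx ha) (ENNReal.rpow_lt_rpow hy hb)
        _ ≤ h (a • x + b • y) := hfgh x y
    · have h_empty {k : ℝ → ℝ≥0∞} (hk : ⨆ x, k x = 1) : {x | ENNReal.ofReal t < k x} = ∅ :=
        eq_empty_of_forall_notMem fun x hx ↦ hx.not_ge ((hk ▸ le_iSup k x).trans ht₁)
      simp [h_empty hf₁, h_empty hg₁]
  have h_meas := measurable_measure_ofReal_lt (volume : Measure ℝ)
  refine (ennreal_geom_mean_le_arith_mean2_weighted ha hb hab _ _).trans ?_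
  simp only [lintegral_eq_lintegral_measure_ofReal_lt volume, hf, hg, hh]
  rw [← lintegral_const_mul _ (h_meas f), ← lintegral_const_mul _ (h_meas g),
    ← lintegral_add_left ((h_meas f).const_mul _)]
  exact setLIntegral_mono (h_meas h) h_level

theorem prekopaLeindler_real_of_iSup_ne_top (ha : 0 < a) (hb : 0 < b) (hab : a + b = 1)
    (hf : Measurable f) (hg : Measurable g) (hh : Measurable h)
    (hfgh : ∀ x y, f x ^ a * g y ^ b ≤ h (a • x + b • y)) (hf_top : ⨆ x, f x ≠ ∞)
    (hg_top : ⨆ x, g x ≠ ∞) :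
    (∫⁻ x, f x) ^ a * (∫⁻ x, g x) ^ b ≤ ∫⁻ x, h x := by
  rcases eq_or_ne (⨆ x, f x) 0 with hf₀ | hf₀
  · simp [ENNReal.iSup_eq_zero.1 hf₀, ha]
  rcases eq_or_ne (⨆ x, g x) 0 with hg₀ | hg₀
  · simp [ENNReal.iSup_eq_zero.1 hg₀, hb]
  set M := ⨆ x, f x
  set N := ⨆ x, g x
  have hM : (M ^ a)⁻¹ ≠ ∞ := by simp [hf₀, hf_top]
  have hN : (N ^ b)⁻¹ ≠ ∞ := by simp [hg₀, hg_top]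
  have h_scale (x y : ℝ≥0∞) :
      (M⁻¹ * x) ^ a * (N⁻¹ * y) ^ b = (M ^ a)⁻¹ * (N ^ b)⁻¹ * (x ^ a * y ^ b) := by
    rw [ENNReal.mul_rpow_of_nonneg _ _ ha.le, ENNReal.mul_rpow_of_nonneg _ _ hb.le,
      ENNReal.inv_rpow, ENNReal.inv_rpow]
    ring
  have h_normalized := prekopaLeindler_real_of_iSup_eq_one ha hb hab (hf.const_mul M⁻¹)
    (hg.const_mul N⁻¹) (hh.const_mul ((M ^ a)⁻¹ * (N ^ b)⁻¹))
    (fun x y ↦ (h_scale _ _).trans_le (by gcongr; exact hfgh x y))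
    (by rw [← ENNReal.mul_iSup, ENNReal.inv_mul_cancel hf₀ hf_top])
    (by rw [← ENNReal.mul_iSup, ENNReal.inv_mul_cancel hg₀ hg_top])
  rw [lintegral_const_mul _ hf, lintegral_const_mul _ hg, lintegral_const_mul _ hh,
    h_scale] at h_normalized
  refine (ENNReal.mul_le_mul_iff_right ?_ (ENNReal.mul_ne_top hM hN)).1 h_normalized
  simp [hf₀, hf_top, hg₀, hg_top]

theorem tendsto_lintegral_min_natCast {α : Type*} [MeasurableSpace α] {μ : Measure α}
    {f : α → ℝ≥0∞} (hf : Measurable f) :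
    Tendsto (fun k : ℕ ↦ ∫⁻ x, min (f x) k ∂μ) atTop (𝓝 (∫⁻ x, f x ∂μ)) := by
  refine lintegral_tendsto_of_tendsto_of_monotone
    (fun k ↦ (hf.min measurable_const).aemeasurable)
    (.of_forall fun x k l hkl ↦ min_le_min_left _ (Nat.cast_le.2 hkl)) (.of_forall fun x ↦ ?_)
  simpa using tendsto_const_nhds.min ENNReal.tendsto_nat_nhds_top

theorem isPrekopaLeindler_volume_real : IsPrekopaLeindler (volume : Measure ℝ) := by
  intro a b ha hb hab f g h hf hg hh hfgh
  rcases eq_or_ne (∫⁻ x, f x) 0 with hf₀ | hf₀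
  · simp [hf₀, ha]
  rcases eq_or_ne (∫⁻ x, g x) 0 with hg₀ | hg₀
  · simp [hg₀, hb]
  refine le_of_tendsto' (ENNReal.Tendsto.mul
    ((tendsto_lintegral_min_natCast hf).ennrpow_const a) (.inl (by simp [hf₀, ha.le]))
    ((tendsto_lintegral_min_natCast hg).ennrpow_const b) (.inl (by simp [hg₀, hb.le]))) fun k ↦ ?_
  refine prekopaLeindler_real_of_iSup_ne_top ha hb hab (hf.min measurable_const)
    (hg.min measurable_const) hh (fun x y ↦ le_trans ?_ (hfgh x y))
    (ne_top_of_le_ne_top (ENNReal.natCast_ne_top k) (iSup_le fun x ↦ min_le_right _ _))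
    (ne_top_of_le_ne_top (ENNReal.natCast_ne_top k) (iSup_le fun x ↦ min_le_right _ _))
  gcongr <;> exact min_le_left _ _

namespace IsPrekopaLeindler

variable {μ : Measure E} {ν : Measure F}

theorem prod [SFinite ν] (hμ : IsPrekopaLeindler μ) (hν : IsPrekopaLeindler ν) :
    IsPrekopaLeindler (μ.prod ν) := by
  intro a b ha hb hab f g h hf hg hh hfgh
  rw [lintegral_prod _ hf.aemeasurable, lintegral_prod _ hg.aemeasurable,
    lintegral_prod _ hh.aemeasurable]
  exact hμ ha hb hab hf.lintegral_prod_right' hg.lintegral_prod_right' hh.lintegral_prod_right'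
    fun x x' ↦ hν ha hb hab (by fun_prop) (by fun_prop) (by fun_prop)
      fun y y' ↦ hfgh (x, y) (x', y')

theorem map (hμ : IsPrekopaLeindler μ) (L : E →ₗ[ℝ] F) (hL : Measurable L) :
    IsPrekopaLeindler (μ.map L) := by
  intro a b ha hb hab f g h hf hg hh hfgh
  rw [lintegral_map hf hL, lintegral_map hg hL, lintegral_map hh hL]
  exact hμ ha hb hab (hf.comp hL) (hg.comp hL) (hh.comp hL)
    fun x y ↦ by simpa using hfgh (L x) (L y)

theorem smul (hμ : IsPrekopaLeindler μ) (c : ℝ≥0) : IsPrekopaLeindler (c • μ) := by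
  intro a b ha hb hab f g h hf hg hh hfgh
  simp only [lintegral_smul_measure, ENNReal.smul_def, smul_eq_mul]
  calc ((c : ℝ≥0∞) * ∫⁻ x, f x ∂μ) ^ a * (c * ∫⁻ x, g x ∂μ) ^ b
      = c ^ (a + b) * ((∫⁻ x, f x ∂μ) ^ a * (∫⁻ x, g x ∂μ) ^ b) := by
        rw [ENNReal.mul_rpow_of_nonneg _ _ ha.le, ENNReal.mul_rpow_of_nonneg _ _ hb.le,
          ENNReal.rpow_add_of_nonneg _ _ ha.le hb.le]
        ring
    _ ≤ c * ∫⁻ x, h x ∂μ := by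
        rw [hab, ENNReal.rpow_one]
        gcongr
        exact hμ ha hb hab hf hg hh hfgh

end IsPrekopaLeindler

theorem isPrekopaLeindler_volume_pi : ∀ n : ℕ, IsPrekopaLeindler (volume : Measure (Fin n → ℝ))
  | 0 => by
    intro a b _ _ _ f g h _ _ _ hfgh
    simpa [volume_pi, Measure.pi_of_empty (μ := fun _ : Fin 0 ↦ (volume : Measure ℝ)) 0,
      Subsingleton.elim (a • (0 : Fin 0 → ℝ) + b • 0) 0] using hfgh 0 0
  | n + 1 => by
    have h_cons := (volume_preserving_piFinSuccAbove (fun _ : Fin (n + 1) ↦ ℝ) 0).symm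
    rw [← h_cons.map_eq]
    convert! (isPrekopaLeindler_volume_real.prod (isPrekopaLeindler_volume_pi n)).map
      (Fin.consLinearEquiv ℝ fun _ : Fin (n + 1) ↦ ℝ).toLinearMap ?_
    · ext p i
      refine Fin.cases ?_ (fun j ↦ ?_) i <;> simp
    · convert h_cons.measurable
      ext p i
      refine Fin.cases ?_ (fun j ↦ ?_) i <;> simp

theorem isPrekopaLeindler_of_isAddHaarMeasure {E : Type*} [NormedAddCommGroup E] [NormedSpace ℝ E]
    [FiniteDimensional ℝ E] [MeasurableSpace E] [BorelSpace E] (μ : Measure E)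
    [μ.IsAddHaarMeasure] : IsPrekopaLeindler μ := by
  let e : (Fin (finrank ℝ E) → ℝ) ≃L[ℝ] E := ContinuousLinearEquiv.ofFinrankEq (by simp)
  have : (volume.map e).IsAddHaarMeasure :=
    e.isAddHaarMeasure_map volume
  rw [Measure.isAddLeftInvariant_eq_smul μ (volume.map e)]
  exact ((isPrekopaLeindler_volume_pi _).map e.toLinearEquiv.toLinearMap
    e.continuous.measurable).smul _

end PrekopaLeindler

section BrunnMinkowski

theorem IsPrekopaLeindler.measure_rpow_mul_measure_rpow_le {E : Type*} [AddCommGroup E]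
    [Module ℝ E] [MeasurableSpace E] {μ : Measure E} (hμ : IsPrekopaLeindler μ) {a b : ℝ}
    (ha : 0 < a) (hb : 0 < b) (hab : a + b = 1) {A B C : Set E} (hA : MeasurableSet A)
    (hB : MeasurableSet B) (hC : a • A + b • B ⊆ C) : μ A ^ a * μ B ^ b ≤ μ C := by
  have hC' := hC.trans (subset_toMeasurable μ C)
  have h_ind := hμ ha hb hab (f := A.indicator 1) (g := B.indicator 1)
    (h := (toMeasurable μ C).indicator 1)
    (measurable_one.indicator hA) (measurable_one.indicator hB)
    (measurable_one.indicator (measurableSet_toMeasurable μ C)) fun x y ↦ by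
      by_cases hx : x ∈ A
      · by_cases hy : y ∈ B
        · have hxy : a • x + b • y ∈ toMeasurable μ C :=
            hC' (add_mem_add (smul_mem_smul_set hx) (smul_mem_smul_set hy))
          simp [hx, hy, hxy]
        · simp [hy, hb]
      · simp [hx, ha]
  simpa [lintegral_indicator_one, hA, hB, measurableSet_toMeasurable] using h_ind

variable {E : Type*} [NormedAddCommGroup E] [NormedSpace ℝ E] [FiniteDimensional ℝ E]
  [MeasurableSpace E] (μ : Measure E) [μ.IsAddHaarMeasure]

/-- The sharp constant `n |B|^{1/n}` of the isoperimetric inequality in dimension `n`, where `B` is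
the unit ball. -/
noncomputable def isoperimetricConst : ℝ≥0∞ :=
  finrank ℝ E * μ (Metric.ball 0 1) ^ (finrank ℝ E : ℝ)⁻¹

theorem isoperimetricConst_ne_top : isoperimetricConst μ ≠ ∞ :=
  ENNReal.mul_ne_top (ENNReal.natCast_ne_top _)
    (ENNReal.rpow_ne_top_of_nonneg (by positivity) measure_ball_lt_top.ne)

variable [BorelSpace E]

theorem addHaar_inv_smul_self_of_pow_finrank {A : Set E} {r : ℝ} (hr : 0 < r)
    (hA : ENNReal.ofReal r ^ finrank ℝ E = μ A) : μ (r⁻¹ • A) = 1 := by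
  rw [Measure.addHaar_smul, abs_of_pos (by positivity), ← hA, ← ENNReal.ofReal_pow hr.le,
    ← ENNReal.ofReal_mul (by positivity), ← mul_pow, inv_mul_cancel₀ hr.ne', one_pow,
    ENNReal.ofReal_one]

theorem ofReal_add_pow_finrank_le_addHaar {A B C : Set E} (hA : MeasurableSet A)
    (hB : MeasurableSet B) {r s : ℝ} (hr : 0 < r) (hs : 0 < s)
    (hrA : ENNReal.ofReal r ^ finrank ℝ E = μ A) (hsB : ENNReal.ofReal s ^ finrank ℝ E = μ B)
    (hC : A + B ⊆ C) : ENNReal.ofReal (r + s) ^ finrank ℝ E ≤ μ C := by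
  -- Rescale `A` and `B` to unit measure: a convex combination of them fills `(r + s)⁻¹ • C`.
  have h_sub : (r / (r + s)) • r⁻¹ • A + (s / (r + s)) • s⁻¹ • B ⊆ (r + s)⁻¹ • C := by
    rw [smul_smul, smul_smul, div_mul_eq_mul_div, div_mul_eq_mul_div, mul_inv_cancel₀ hr.ne',
      mul_inv_cancel₀ hs.ne', one_div, ← smul_add]
    exact smul_set_mono hC
  have h_unit := (isPrekopaLeindler_of_isAddHaarMeasure μ).measure_rpow_mul_measure_rpow_le
    (by positivity) (by positivity) (by field_simp) (hA.const_smul₀ r⁻¹) (hB.const_smul₀ s⁻¹) h_sub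
  rw [addHaar_inv_smul_self_of_pow_finrank μ hr hrA, addHaar_inv_smul_self_of_pow_finrank μ hs hsB,
    ENNReal.one_rpow, ENNReal.one_rpow, one_mul, Measure.addHaar_smul,
    abs_of_pos (by positivity)] at h_unit
  calc ENNReal.ofReal (r + s) ^ finrank ℝ E
      ≤ ENNReal.ofReal (r + s) ^ finrank ℝ E *
          (ENNReal.ofReal ((r + s)⁻¹ ^ finrank ℝ E) * μ C) := le_mul_of_one_le_right' h_unit
    _ = μ C := by
        rw [← mul_assoc, ← ENNReal.ofReal_pow (by positivity), ← ENNReal.ofReal_mul (by positivity),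
          ← mul_pow, mul_inv_cancel₀ (by positivity), one_pow, ENNReal.ofReal_one, one_mul]

theorem addHaar_rpow_add_addHaar_rpow_le [Nontrivial E] {A B C : Set E} (hA : MeasurableSet A)
    (hB : MeasurableSet B) (hA₀ : A.Nonempty) (hB₀ : B.Nonempty) (hC : A + B ⊆ C) :
    μ A ^ (finrank ℝ E : ℝ)⁻¹ + μ B ^ (finrank ℝ E : ℝ)⁻¹ ≤ μ C ^ (finrank ℝ E : ℝ)⁻¹ := by
  have hn : finrank ℝ E ≠ 0 := finrank_pos.ne'
  have hn' : 0 < (finrank ℝ E : ℝ)⁻¹ := by positivity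
  have hAC : μ A ≤ μ C := by
    obtain ⟨b, hb⟩ := hB₀
    rw [← measure_vadd μ b A]
    exact measure_mono ((vadd_set_subset_add hb).trans ((add_comm B A).subset.trans hC))
  have hBC : μ B ≤ μ C := by
    obtain ⟨a, ha⟩ := hA₀
    rw [← measure_vadd μ a B]
    exact measure_mono ((vadd_set_subset_add ha).trans hC)
  rcases eq_or_ne (μ A) 0 with hμA | hμA
  · simpa [hμA, hn'] using ENNReal.rpow_le_rpow hBC hn'.le
  rcases eq_or_ne (μ B) 0 with hμB | hμB
  · simpa [hμB, hn'] using ENNReal.rpow_le_rpow hAC hn'.le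
  rcases eq_or_ne (μ C) ∞ with hμC | hμC
  · simp [hμC, hn']
  have h_root {D : Set E} (hD : μ D ≠ 0) (hDC : μ D ≤ μ C) :
      ∃ r : ℝ, 0 < r ∧ ENNReal.ofReal r = μ D ^ (finrank ℝ E : ℝ)⁻¹ ∧
        ENNReal.ofReal r ^ finrank ℝ E = μ D := by
    have h_top : μ D ^ (finrank ℝ E : ℝ)⁻¹ ≠ ∞ :=
      ENNReal.rpow_ne_top_of_nonneg hn'.le (ne_top_of_le_ne_top hμC hDC)
    exact ⟨_, ENNReal.toReal_pos (by simp [hD]) h_top, ENNReal.ofReal_toReal h_top,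
      by rw [ENNReal.ofReal_toReal h_top, ENNReal.rpow_inv_natCast_pow hn]⟩
  obtain ⟨r, hr, hrA, hrA'⟩ := h_root hμA hAC
  obtain ⟨s, hs, hsB, hsB'⟩ := h_root hμB hBC
  rw [ENNReal.le_rpow_inv_iff (by positivity), ENNReal.rpow_natCast, ← hrA, ← hsB,
    ← ENNReal.ofReal_add hr.le hs.le]
  exact ofReal_add_pow_finrank_le_addHaar μ hA hB hr hs hrA' hsB' hC

theorem addHaar_add_isoperimetricConst_le_addHaar_thickening [Nontrivial E] {A : Set E}
    (hA : MeasurableSet A) (hA₀ : A.Nonempty) {h : ℝ} (hh : 0 < h) :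
    μ A + ENNReal.ofReal h * (isoperimetricConst μ * μ A ^ (1 - (finrank ℝ E : ℝ)⁻¹)) ≤
      μ (Metric.thickening h A) := by
  have hn : finrank ℝ E ≠ 0 := finrank_pos.ne'
  have h_ball : μ (Metric.ball 0 h) ^ (finrank ℝ E : ℝ)⁻¹ =
      ENNReal.ofReal h * μ (Metric.ball 0 1) ^ (finrank ℝ E : ℝ)⁻¹ := by
    rw [Measure.addHaar_ball_of_pos μ 0 hh, ENNReal.mul_rpow_of_nonneg _ _ (by positivity),
      ENNReal.ofReal_pow hh.le, ENNReal.pow_rpow_inv_natCast hn]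
  have h_bm := addHaar_rpow_add_addHaar_rpow_le μ hA Metric.isOpen_ball.measurableSet hA₀
    (Metric.nonempty_ball.2 hh) (add_ball_zero h A).subset
  rw [ENNReal.le_rpow_inv_iff (by positivity), ENNReal.rpow_natCast, h_ball] at h_bm
  have h_pow : (μ A ^ (finrank ℝ E : ℝ)⁻¹) ^ (finrank ℝ E - 1) =
      μ A ^ (1 - (finrank ℝ E : ℝ)⁻¹) := by
    rw [← ENNReal.rpow_mul_natCast, Nat.cast_pred (Nat.pos_of_ne_zero hn)]
    congr 1
    field_simp
  calc μ A + ENNReal.ofReal h * (isoperimetricConst μ * μ A ^ (1 - (finrank ℝ E : ℝ)⁻¹))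
      = (μ A ^ (finrank ℝ E : ℝ)⁻¹) ^ finrank ℝ E +
          finrank ℝ E * (μ A ^ (finrank ℝ E : ℝ)⁻¹) ^ (finrank ℝ E - 1) *
            (ENNReal.ofReal h * μ (Metric.ball 0 1) ^ (finrank ℝ E : ℝ)⁻¹) := by
        rw [ENNReal.rpow_inv_natCast_pow hn, h_pow, isoperimetricConst]
        ring
    _ ≤ _ := pow_add_mul_le_add_pow zero_le zero_le _
    _ ≤ μ (Metric.thickening h A) := h_bm

end BrunnMinkowski

section Sobolev

variable {E F : Type*} [NormedAddCommGroup E] [NormedSpace ℝ E] [NormedAddCommGroup F]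
  [NormedSpace ℝ F] {g : E → F}

theorem norm_image_le_add_of_norm_fderiv_sub_le (hg : Differentiable ℝ g) {h η : ℝ} {y z : E}
    (hyz : dist y z < h) (hη : ∀ x, dist x z < h → ‖fderiv ℝ g x - fderiv ℝ g z‖ ≤ η) :
    ‖g y‖ ≤ ‖g z‖ + h * (‖fderiv ℝ g z‖ + η) := by
  have hη₀ : 0 ≤ η := (norm_nonneg _).trans (hη y hyz)
  have h_mvt := (convex_ball z h).norm_image_sub_le_of_norm_fderiv_le (𝕜 := ℝ) (f := g)
    (C := ‖fderiv ℝ g z‖ + η) (fun x _ ↦ hg x)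
    (fun x hx ↦ (norm_le_norm_add_norm_sub' _ _).trans (by gcongr; exact hη x hx))
    (Metric.mem_ball_self (dist_nonneg.trans_lt hyz)) hyz
  calc ‖g y‖ ≤ ‖g z‖ + ‖g y - g z‖ := norm_le_norm_add_norm_sub' _ _
    _ ≤ ‖g z‖ + (‖fderiv ℝ g z‖ + η) * ‖y - z‖ := by gcongr
    _ ≤ ‖g z‖ + h * (‖fderiv ℝ g z‖ + η) := by
        rw [mul_comm, ← dist_eq_norm]
        gcongr

theorem exists_thickening_subset_of_contDiff (hg : ContDiff ℝ 1 g) (hg_supp : HasCompactSupport g)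
    {η : ℝ≥0∞} (hη : η ≠ 0) :
    ∃ h : ℝ, 0 < h ∧ ∀ t : ℝ≥0∞, Metric.thickening h {y | t < ‖g y‖ₑ} ⊆
      {z | t < ‖g z‖ₑ + ENNReal.ofReal h *
        (‖fderiv ℝ g z‖ₑ + (Metric.cthickening 1 (tsupport g)).indicator (fun _ ↦ η) z)} := by
  obtain ⟨ε, hε, hεη⟩ := ENNReal.lt_iff_exists_nnreal_btwn.1 (pos_iff_ne_zero.2 hη)
  have hε : 0 < ε := by simpa using hε
  obtain ⟨r, hr, hr_unif⟩ := Metric.uniformContinuous_iff.1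
    ((hg_supp.fderiv ℝ).uniformContinuous_of_continuous (hg.continuous_fderiv one_ne_zero)) ε hε
  refine ⟨min r 1, by positivity, fun t z hz ↦ ?_⟩
  obtain ⟨y, hy, hzy⟩ := Metric.mem_thickening_iff.1 hz
  have hy_supp : y ∈ tsupport g := subset_tsupport g fun h₀ ↦ by simp [h₀] at hy
  have hz_supp : z ∈ Metric.cthickening 1 (tsupport g) :=
    Metric.mem_cthickening_of_dist_le z y 1 _ hy_supp (hzy.le.trans (min_le_right _ _))
  have h_real := norm_image_le_add_of_norm_fderiv_sub_le (hg.differentiable one_ne_zero)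
    (dist_comm z y ▸ hzy) fun x hx ↦ by
      rw [← dist_eq_norm]
      exact (hr_unif (hx.trans_le (min_le_left _ _))).le
  calc t < ‖g y‖ₑ := hy
    _ = ENNReal.ofReal ‖g y‖ := (ofReal_norm _).symm
    _ ≤ ENNReal.ofReal (‖g z‖ + min r 1 * (‖fderiv ℝ g z‖ + ε)) := ENNReal.ofReal_le_ofReal h_real
    _ = ‖g z‖ₑ + ENNReal.ofReal (min r 1) * (‖fderiv ℝ g z‖ₑ + ε) := by
        rw [ENNReal.ofReal_add (by positivity) (by positivity), ENNReal.ofReal_mul (by positivity),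
          ENNReal.ofReal_add (by positivity) (by positivity), ofReal_norm, ofReal_norm,
          ENNReal.ofReal_coe_nnreal]
    _ ≤ _ := by
        rw [indicator_of_mem hz_supp]
        gcongr

variable [FiniteDimensional ℝ E] [MeasurableSpace E] [BorelSpace E] (μ : Measure E)
  [μ.IsAddHaarMeasure]

theorem addHaar_add_isoperimetricConst_mul_le_of_thickening_subset (hE : 1 < finrank ℝ E)
    {A B : Set E} (hA : MeasurableSet A) {h : ℝ} (hh : 0 < h) (hB : Metric.thickening h A ⊆ B) :
    μ A + ENNReal.ofReal h * (isoperimetricConst μ * μ A ^ (1 - (finrank ℝ E : ℝ)⁻¹)) ≤ μ B := by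
  have : Nontrivial E := nontrivial_of_finrank_pos (one_pos.trans hE)
  rcases A.eq_empty_or_nonempty with rfl | hA₀
  · simp [sub_pos, inv_lt_one_of_one_lt₀, hE]
  · exact (addHaar_add_isoperimetricConst_le_addHaar_thickening μ hA hA₀ hh).trans (measure_mono hB)

theorem isoperimetricConst_mul_lintegral_le_add (hE : 1 < finrank ℝ E) (hg : ContDiff ℝ 1 g)
    (hg_supp : HasCompactSupport g) {η : ℝ≥0∞} (hη : η ≠ 0) :
    isoperimetricConst μ *
        ∫⁻ t in Ioi (0 : ℝ), μ {y | ENNReal.ofReal t < ‖g y‖ₑ} ^ (1 - (finrank ℝ E : ℝ)⁻¹) ≤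
      (∫⁻ y, ‖fderiv ℝ g y‖ₑ ∂μ) + η * μ (Metric.cthickening 1 (tsupport g)) := by
  obtain ⟨h, hh, h_sub⟩ := exists_thickening_subset_of_contDiff hg hg_supp hη
  set K := Metric.cthickening 1 (tsupport g)
  have hK : MeasurableSet K := Metric.isClosed_cthickening.measurableSet
  have h_int : ∫⁻ y, ‖g y‖ₑ ∂μ ≠ ∞ :=
    (hg.continuous.integrable_of_hasCompactSupport hg_supp).2.ne
  have h_meas_g : Measurable fun y ↦ ‖g y‖ₑ := hg.continuous.enorm.measurable
  have h_meas_fderiv : Measurable fun y ↦ ‖fderiv ℝ g y‖ₑ :=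
    (hg.continuous_fderiv one_ne_zero).enorm.measurable
  have : Measurable (K.indicator fun _ ↦ η) := measurable_const.indicator hK
  have h_meas_level := measurable_measure_ofReal_lt μ fun y ↦ ‖g y‖ₑ
  have h_sum : (∫⁻ y, ‖g y‖ₑ ∂μ) + ENNReal.ofReal h * (isoperimetricConst μ *
      ∫⁻ t in Ioi (0 : ℝ), μ {y | ENNReal.ofReal t < ‖g y‖ₑ} ^ (1 - (finrank ℝ E : ℝ)⁻¹)) ≤
      (∫⁻ y, ‖g y‖ₑ ∂μ) +
        ENNReal.ofReal h * ((∫⁻ y, ‖fderiv ℝ g y‖ₑ ∂μ) + η * μ K) := by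
    calc _ = ∫⁻ t in Ioi (0 : ℝ), (μ {y | ENNReal.ofReal t < ‖g y‖ₑ} + ENNReal.ofReal h *
          (isoperimetricConst μ *
            μ {y | ENNReal.ofReal t < ‖g y‖ₑ} ^ (1 - (finrank ℝ E : ℝ)⁻¹))) := by
          rw [lintegral_add_left h_meas_level,
            lintegral_const_mul _ ((h_meas_level.pow_const _).const_mul _),
            lintegral_const_mul _ (h_meas_level.pow_const _),
            lintegral_eq_lintegral_measure_ofReal_lt μ h_meas_g]
      _ ≤ ∫⁻ t in Ioi (0 : ℝ), μ {z | ENNReal.ofReal t < ‖g z‖ₑ + ENNReal.ofReal h *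
            (‖fderiv ℝ g z‖ₑ + K.indicator (fun _ ↦ η) z)} :=
          lintegral_mono fun t ↦ addHaar_add_isoperimetricConst_mul_le_of_thickening_subset μ hE
            (measurableSet_lt measurable_const h_meas_g) hh (h_sub _)
      _ = ∫⁻ z, (‖g z‖ₑ + ENNReal.ofReal h *
            (‖fderiv ℝ g z‖ₑ + K.indicator (fun _ ↦ η) z)) ∂μ :=
          (lintegral_eq_lintegral_measure_ofReal_lt μ (by fun_prop)).symm
      _ = _ := by
          rw [lintegral_add_left h_meas_g, lintegral_const_mul _ (by fun_prop),
            lintegral_add_left h_meas_fderiv, lintegral_indicator_const hK]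
  rwa [ENNReal.add_le_add_iff_left h_int,
    ENNReal.mul_le_mul_iff_right (by simpa using hh) ENNReal.ofReal_ne_top] at h_sum

theorem isoperimetricConst_mul_lintegral_addHaar_rpow_le (hE : 1 < finrank ℝ E)
    (hg : ContDiff ℝ 1 g) (hg_supp : HasCompactSupport g) :
    isoperimetricConst μ *
        ∫⁻ t in Ioi (0 : ℝ), μ {y | ENNReal.ofReal t < ‖g y‖ₑ} ^ (1 - (finrank ℝ E : ℝ)⁻¹) ≤
      ∫⁻ y, ‖fderiv ℝ g y‖ₑ ∂μ := by
  have hK : μ (Metric.cthickening 1 (tsupport g)) ≠ ∞ :=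
    (IsCompact.cthickening hg_supp).measure_ne_top
  have h_lim : Tendsto (fun η ↦ (∫⁻ y, ‖fderiv ℝ g y‖ₑ ∂μ) +
      η * μ (Metric.cthickening 1 (tsupport g))) (𝓝[>] 0) (𝓝 (∫⁻ y, ‖fderiv ℝ g y‖ₑ ∂μ)) := by
    have := (ENNReal.Tendsto.mul_const (tendsto_id (α := ℝ≥0∞) (x := 𝓝 0)) (.inr hK)).const_add
      (∫⁻ y, ‖fderiv ℝ g y‖ₑ ∂μ)
    simp only [zero_mul, add_zero] at this
    exact this.mono_left nhdsWithin_le_nhds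
  refine ge_of_tendsto h_lim (eventually_mem_nhdsWithin.mono fun η hη ↦ ?_)
  exact isoperimetricConst_mul_lintegral_le_add μ hE hg hg_supp (pos_iff_ne_zero.1 hη)

theorem lintegral_rpow_le_mul_lintegral_measure_rpow {α : Type*} [MeasurableSpace α]
    (μ : Measure α) [SFinite μ] {f : α → ℝ≥0∞} (hf : Measurable f) {q p : ℝ}
    (hqp : q.HolderConjugate p) :
    ∫⁻ x, f x ^ p ∂μ ≤ (∫⁻ x, f x ^ p ∂μ) ^ (1 / q) *
      ∫⁻ t in Ioi (0 : ℝ), μ {x | ENNReal.ofReal t < f x} ^ (1 / p) := by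
  have h_slice (t : ℝ) : ∫⁻ x in {x | ENNReal.ofReal t < f x}, f x ^ (p - 1) ∂μ ≤
      (∫⁻ x, f x ^ p ∂μ) ^ (1 / q) * μ {x | ENNReal.ofReal t < f x} ^ (1 / p) := by
    have h_holder := ENNReal.lintegral_mul_le_Lp_mul_Lq
      (μ.restrict {x | ENNReal.ofReal t < f x}) hqp (f := fun x ↦ f x ^ (p - 1)) (g := 1)
      (by fun_prop) (by fun_prop)
    simp only [Pi.mul_apply, Pi.one_apply, mul_one, ENNReal.one_rpow, lintegral_one,
      Measure.restrict_apply_univ, ← ENNReal.rpow_mul, hqp.symm.sub_one_mul_conj] at h_holder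
    refine h_holder.trans (mul_le_mul_left ?_ _)
    exact ENNReal.rpow_le_rpow (setLIntegral_le_lintegral _ _) hqp.one_div_nonneg
  calc ∫⁻ x, f x ^ p ∂μ = ∫⁻ x, f x ∂(μ.withDensity fun x ↦ f x ^ (p - 1)) := by
        rw [lintegral_withDensity_eq_lintegral_mul _ (by fun_prop) hf]
        refine lintegral_congr fun x ↦ ?_
        calc f x ^ p = f x ^ (p - 1) * f x ^ (1 : ℝ) := by
              rw [← ENNReal.rpow_add_of_nonneg _ _ hqp.symm.sub_one_pos.le zero_le_one,
                sub_add_cancel]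
          _ = f x ^ (p - 1) * f x := by rw [ENNReal.rpow_one]
    _ = ∫⁻ t in Ioi (0 : ℝ), ∫⁻ x in {x | ENNReal.ofReal t < f x}, f x ^ (p - 1) ∂μ := by
        rw [lintegral_eq_lintegral_measure_ofReal_lt _ hf]
        simp only [withDensity_apply, measurableSet_lt measurable_const hf]
    _ ≤ ∫⁻ t in Ioi (0 : ℝ),
          (∫⁻ x, f x ^ p ∂μ) ^ (1 / q) * μ {x | ENNReal.ofReal t < f x} ^ (1 / p) :=
        lintegral_mono h_slice
    _ = _ := lintegral_const_mul _ ((measurable_measure_ofReal_lt μ f).pow_const _)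

theorem isoperimetricConst_mul_eLpNorm_le_eLpNorm_fderiv_one {p : ℝ≥0}
    (hp : NNReal.HolderConjugate (finrank ℝ E) p) (hg : ContDiff ℝ 1 g)
    (hg_supp : HasCompactSupport g) :
    isoperimetricConst μ * eLpNorm g p μ ≤ eLpNorm (fderiv ℝ g) 1 μ := by
  have hp' : Real.HolderConjugate (finrank ℝ E) p := mod_cast hp.coe
  have hE : 1 < finrank ℝ E := mod_cast hp'.lt
  have hp₀ : (p : ℝ≥0∞) ≠ 0 := by simpa using hp.symm.pos.ne'
  rw [eLpNorm_one_eq_lintegral_enorm,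
    eLpNorm_eq_lintegral_rpow_enorm_toReal hp₀ ENNReal.coe_ne_top, ENNReal.coe_toReal]
  refine le_trans ?_ (isoperimetricConst_mul_lintegral_addHaar_rpow_le μ hE hg hg_supp)
  gcongr
  rw [hp'.one_sub_inv, ← one_div]
  have h_memLp : eLpNorm g p μ < ∞ := (hg.continuous.memLp_of_hasCompactSupport hg_supp).2
  have h_int := lintegral_rpow_enorm_lt_top_of_eLpNorm_lt_top hp₀ ENNReal.coe_ne_top h_memLp
  rw [ENNReal.coe_toReal] at h_int
  set I := ∫⁻ y, ‖g y‖ₑ ^ (p : ℝ) ∂μ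
  rcases eq_or_ne I 0 with hI₀ | hI₀
  · simp [hI₀, hp'.symm.pos]
  refine (ENNReal.mul_le_mul_iff_right (a := I ^ (1 / (finrank ℝ E : ℝ))) (by simp [hI₀, h_int.ne])
    (ENNReal.rpow_ne_top_of_nonneg (by positivity) h_int.ne)).1 ?_
  rw [← ENNReal.rpow_add _ _ hI₀ h_int.ne, one_div, one_div, hp'.inv_add_inv_eq_one,
    ENNReal.rpow_one, ← one_div, ← one_div]
  exact lintegral_rpow_le_mul_lintegral_measure_rpow μ hg.continuous.enorm.measurable hp'

end Sobolev

section BoundedVariation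

open scoped Convolution

variable {E X : Type*} [NormedAddCommGroup E] [NormedSpace ℝ E] [MeasurableSpace E]
  [MeasurableSpace X]

/-- The derivative of `w` in the sense of distributions (with respect to `μ`) is the vector measure
`u_* (ℓ ν)`, the push-forward under `u` of the measure with density `ℓ` with respect to `ν`. -/
def HasDistribDeriv (μ : Measure E) (w : E → ℝ) (ν : Measure X) (u : X → E)
    (ℓ : X → StrongDual ℝ E) : Prop :=
  ∀ ⦃φ : E → ℝ⦄, ContDiff ℝ 1 φ → HasCompactSupport φ → ∀ v : E,
    ∫ y, w y * fderiv ℝ φ y v ∂μ = -∫ p, φ (u p) * ℓ p v ∂ν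

namespace HasDistribDeriv

variable [BorelSpace E] {μ : Measure E} {w : E → ℝ} {ν : Measure X} {u : X → E}
  {ℓ : X → StrongDual ℝ E} {ρ : E → ℝ}

theorem map_continuousLinearEquiv {F : Type*} [NormedAddCommGroup F] [NormedSpace ℝ F]
    [MeasurableSpace F] [BorelSpace F] (h : HasDistribDeriv μ w ν u ℓ) (e : E ≃L[ℝ] F) :
    HasDistribDeriv (μ.map e) (w ∘ e.symm) ν (e ∘ u) fun p ↦ (ℓ p).comp (e.symm : F →L[ℝ] E) := by
  intro φ hφ hφ_supp v
  have h_fderiv (x : E) : fderiv ℝ (φ ∘ e) x (e.symm v) = fderiv ℝ φ (e x) v := by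
    simp [e.comp_right_fderiv]
  have h_map := e.toHomeomorph.measurableEmbedding.integral_map (μ := μ)
    fun y ↦ (w ∘ e.symm) y * fderiv ℝ φ y v
  simpa [h_fderiv] using h_map.trans <| by
    simpa [h_fderiv] using h (hφ.comp e.contDiff)
      (hφ_supp.comp_homeomorph e.toHomeomorph) (e.symm v)

variable [FiniteDimensional ℝ E] [μ.IsAddHaarMeasure]

theorem fderiv_convolution (h : HasDistribDeriv μ w ν u ℓ) (hw : LocallyIntegrable w μ)
    (hu : AEMeasurable u ν) (hℓ : Integrable ℓ ν) (hρ : ContDiff ℝ 1 ρ)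
    (hρ_supp : HasCompactSupport ρ) (y : E) :
    fderiv ℝ (ρ ⋆[ContinuousLinearMap.lsmul ℝ ℝ, μ] w) y = ∫ p, ρ (y - u p) • ℓ p ∂ν := by
  obtain ⟨C, hC⟩ := hρ.continuous.bounded_above_of_compact_support hρ_supp
  have h_int : Integrable (fun p ↦ ρ (y - u p) • ℓ p) ν :=
    hℓ.bdd_smul C (hρ.continuous.measurable.comp_aemeasurable
      (hu.const_sub y)).aestronglyMeasurable (.of_forall fun p ↦ hC _)
  have h_reflect (z : E) : HasFDerivAt (fun z ↦ ρ (y - z)) (-fderiv ℝ ρ (y - z)) z := by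
    simpa [Function.comp_def] using ((hρ.differentiable one_ne_zero (y - z)).hasFDerivAt.comp z
      ((hasFDerivAt_id z).const_sub y))
  ext v
  rw [← convolution_flip, (hρ_supp.hasFDerivAt_convolution_right _ hw hρ y).fderiv,
    convolution_precompR_apply _ hw (hρ_supp.fderiv ℝ) (hρ.continuous_fderiv one_ne_zero),
    ContinuousLinearMap.integral_apply h_int]
  have h_weak := h (φ := fun z ↦ ρ (y - z)) (hρ.comp (contDiff_const.sub contDiff_id))
    (hρ_supp.comp_homeomorph (Homeomorph.subLeft y)) v
  simp only [(h_reflect _).fderiv, neg_apply, mul_neg, integral_neg,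
    neg_inj] at h_weak
  simpa [convolution_def, mul_comm] using h_weak

theorem eLpNorm_fderiv_convolution_le [SFinite ν] (h : HasDistribDeriv μ w ν u ℓ)
    (hw : LocallyIntegrable w μ) (hu : AEMeasurable u ν) (hℓ : Integrable ℓ ν)
    (hρ : ContDiff ℝ 1 ρ) (hρ_supp : HasCompactSupport ρ) :
    eLpNorm (fderiv ℝ (ρ ⋆[ContinuousLinearMap.lsmul ℝ ℝ, μ] w)) 1 μ ≤
      eLpNorm ρ 1 μ * eLpNorm ℓ 1 ν := by
  have hρ_meas : Measurable fun z ↦ ‖ρ z‖ₑ := hρ.continuous.enorm.measurable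
  simp only [eLpNorm_one_eq_lintegral_enorm, h.fderiv_convolution hw hu hℓ hρ hρ_supp]
  calc ∫⁻ y, ‖∫ p, ρ (y - u p) • ℓ p ∂ν‖ₑ ∂μ
      ≤ ∫⁻ y, ∫⁻ p, ‖ρ (y - u p)‖ₑ * ‖ℓ p‖ₑ ∂ν ∂μ := lintegral_mono fun y ↦ by
        simpa only [enorm_smul] using enorm_integral_le_lintegral_enorm fun p ↦ ρ (y - u p) • ℓ p
    _ = ∫⁻ p, ∫⁻ y, ‖ρ (y - u p)‖ₑ * ‖ℓ p‖ₑ ∂μ ∂ν :=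
        lintegral_lintegral_swap <|
          (hρ_meas.comp_aemeasurable (measurable_fst.aemeasurable.sub hu.comp_snd)).mul
            hℓ.aestronglyMeasurable.enorm.comp_snd
    _ = (∫⁻ y, ‖ρ y‖ₑ ∂μ) * ∫⁻ p, ‖ℓ p‖ₑ ∂ν := by
        rw [← lintegral_const_mul'' _ hℓ.aestronglyMeasurable.enorm]
        refine lintegral_congr fun p ↦ ?_
        have h_meas : Measurable fun y ↦ ‖ρ (y - u p)‖ₑ :=
          hρ_meas.comp (measurable_sub_const (u p))
        rw [lintegral_mul_const _ h_meas, lintegral_sub_right_eq_self fun z ↦ ‖ρ z‖ₑ]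

theorem isoperimetricConst_mul_eLpNorm_le [SFinite ν] (h : HasDistribDeriv μ w ν u ℓ) {q : ℝ≥0}
    (hq : NNReal.HolderConjugate (finrank ℝ E) q) (hw : LocallyIntegrable w μ)
    (hw_supp : HasCompactSupport w) (hu : AEMeasurable u ν) (hℓ : Integrable ℓ ν) :
    isoperimetricConst μ * eLpNorm w q μ ≤ eLpNorm ℓ 1 ν := by
  let ρ (k : ℕ) : ContDiffBump (0 : E) :=
    ⟨1 / (k + 1), 2 * (1 / (k + 1)), by positivity, lt_mul_left (by positivity) one_lt_two⟩
  have hρ_lim : Tendsto (fun k ↦ (ρ k).rOut) atTop (𝓝 0) := by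
    simpa [ρ] using tendsto_one_div_add_atTop_nhds_zero_nat.const_mul (2 : ℝ)
  let w' (k : ℕ) : E → ℝ := (ρ k).normed μ ⋆[ContinuousLinearMap.lsmul ℝ ℝ, μ] w
  have hw' (k : ℕ) : ContDiff ℝ 1 (w' k) :=
    (ρ k).hasCompactSupport_normed.contDiff_convolution_left _ (ρ k).contDiff_normed hw
  have hw'_supp (k : ℕ) : HasCompactSupport (w' k) :=
    (ρ k).hasCompactSupport_normed.convolution _ hw_supp
  have h_norm (k : ℕ) : eLpNorm ((ρ k).normed μ) 1 μ = 1 := by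
    rw [eLpNorm_one_eq_lintegral_enorm,
      ← ofReal_integral_norm_eq_lintegral_enorm (ρ k).integrable_normed]
    simp [abs_of_nonneg ((ρ k).nonneg_normed _), (ρ k).integral_normed]
  have h_bound (k : ℕ) : isoperimetricConst μ * eLpNorm (w' k) q μ ≤ eLpNorm ℓ 1 ν :=
    calc _ ≤ eLpNorm (fderiv ℝ (w' k)) 1 μ :=
          isoperimetricConst_mul_eLpNorm_le_eLpNorm_fderiv_one μ hq (hw' k) (hw'_supp k)
      _ ≤ eLpNorm ((ρ k).normed μ) 1 μ * eLpNorm ℓ 1 ν :=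
          h.eLpNorm_fderiv_convolution_le hw hu hℓ (ρ k).contDiff_normed
            (ρ k).hasCompactSupport_normed
      _ = eLpNorm ℓ 1 ν := by rw [h_norm, one_mul]
  have h_fatou : eLpNorm w q μ ≤ liminf (fun k ↦ eLpNorm (w' k) q μ) atTop :=
    Lp.eLpNorm_lim_le_liminf_eLpNorm (fun k ↦ (hw' k).continuous.aestronglyMeasurable) w
      (ContDiffBump.ae_convolution_tendsto_right_of_locallyIntegrable hρ_lim
        (.of_forall fun k ↦ le_rfl) hw)
  calc isoperimetricConst μ * eLpNorm w q μ
      ≤ isoperimetricConst μ * liminf (fun k ↦ eLpNorm (w' k) q μ) atTop := by gcongr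
    _ = liminf (fun k ↦ isoperimetricConst μ * eLpNorm (w' k) q μ) atTop :=
        (ENNReal.liminf_const_mul_of_ne_top (isoperimetricConst_ne_top μ)).symm
    _ ≤ eLpNorm ℓ 1 ν := liminf_le_of_frequently_le' (.of_forall h_bound)

theorem isoperimetricConst_mul_lintegral_rpow_le [SFinite ν] {d : E → ℤ}
    (h : HasDistribDeriv μ (fun y ↦ (d y : ℝ)) ν u ℓ) {q : ℝ≥0}
    (hq : NNReal.HolderConjugate (finrank ℝ E) q) (hd : LocallyIntegrable (fun y ↦ (d y : ℝ)) μ)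
    (hd_supp : HasCompactSupport fun y ↦ (d y : ℝ)) (hu : AEMeasurable u ν)
    (hℓ : Integrable ℓ ν) :
    isoperimetricConst μ * (∫⁻ y, ‖(d y : ℝ)‖ₑ ∂μ) ^ (q : ℝ)⁻¹ ≤ ∫⁻ p, ‖ℓ p‖ₑ ∂ν := by
  have h_le (k : ℤ) : ‖(k : ℝ)‖ₑ ≤ ‖(k : ℝ)‖ₑ ^ (q : ℝ) := by
    rcases eq_or_ne k 0 with rfl | hk
    · simp
    · have h_one : 1 ≤ ‖(k : ℝ)‖ₑ := by
        rw [Real.enorm_eq_ofReal_abs, ENNReal.one_le_ofReal]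
        exact_mod_cast Int.one_le_abs hk
      exact ENNReal.le_rpow_self_of_one_le h_one (mod_cast hq.symm.lt.le)
  have h_main := h.isoperimetricConst_mul_eLpNorm_le hq hd hd_supp hu hℓ
  rw [eLpNorm_one_eq_lintegral_enorm, eLpNorm_eq_lintegral_rpow_enorm_toReal
    (mod_cast hq.symm.ne_zero) ENNReal.coe_ne_top, one_div] at h_main
  refine le_trans ?_ h_main
  simp only [ENNReal.coe_toReal]
  gcongr
  exact h_le _

end HasDistribDeriv

end BoundedVariation

section Degree

theorem encard_inter_preimage_singleton_eq_tsum {α β : Type*} {f : α → β} {S : Set α}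
    {t : ℕ → Set α} (ht : Pairwise (Function.onFun Disjoint t)) (hSt : S ⊆ ⋃ n, t n)
    (hf : ∀ n, InjOn f (S ∩ t n)) (y : β) :
    ((S ∩ f ⁻¹' {y}).encard : ℝ≥0∞) = ∑' n, (f '' (S ∩ t n)).indicator 1 y := by
  let : MeasurableSpace α := ⊤
  have h_iUnion : S ∩ f ⁻¹' {y} = ⋃ n, S ∩ t n ∩ f ⁻¹' {y} := by
    rw [← iUnion_inter, ← inter_iUnion, inter_eq_left.2 hSt]
  rw [← Measure.count_apply MeasurableSpace.measurableSet_top, h_iUnion,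
    measure_iUnion _ fun _ ↦ MeasurableSpace.measurableSet_top]
  · refine tsum_congr fun n ↦ ?_
    by_cases hy : y ∈ f '' (S ∩ t n)
    · obtain ⟨x, hx, rfl⟩ := hy
      have h_fiber : S ∩ t n ∩ f ⁻¹' {f x} = {x} := by
        ext z
        exact ⟨fun hz ↦ hf n hz.1 hx hz.2, fun hz ↦ by rw [mem_singleton_iff.1 hz]; exact ⟨hx, rfl⟩⟩
      rw [h_fiber, Measure.count_singleton, indicator_of_mem (mem_image_of_mem f hx), Pi.one_apply]
    · have h_fiber : S ∩ t n ∩ f ⁻¹' {y} = ∅ :=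
        eq_empty_of_forall_notMem fun x hx ↦ hy ⟨x, hx.1, hx.2⟩
      rw [h_fiber, measure_empty, indicator_of_notMem hy]
  · exact fun m n hmn ↦ (ht hmn).mono (fun _ hx ↦ hx.1.2) fun _ hx ↦ hx.1.2

variable {E F : Type*} [NormedAddCommGroup E] [NormedSpace ℝ E] {f : E → E}
  {f' : E → E →L[ℝ] E} {S : Set E}

/-- The degree at `y` of the restriction of `f` to `S`: the number of preimages of `y` in `S` where
`f` preserves the orientation minus the number of those where it reverses it. The critical points
of `f` are not counted, and an infinite number of preimages counts as `0`. -/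
noncomputable def degreeOn (f : E → E) (S : Set E) (y : E) : ℤ :=
  ({x ∈ S | 0 < (fderiv ℝ f x).det} ∩ f ⁻¹' {y}).ncard -
    ({x ∈ S | (fderiv ℝ f x).det < 0} ∩ f ⁻¹' {y}).ncard

theorem degreeOn_of_notMem_image {y : E} (hy : y ∉ f '' {x ∈ S | (fderiv ℝ f x).det ≠ 0}) :
    degreeOn f S y = 0 := by
  have h_pos : {x ∈ S | 0 < (fderiv ℝ f x).det} ∩ f ⁻¹' {y} = ∅ :=
    eq_empty_of_forall_notMem fun x hx ↦ hy ⟨x, ⟨hx.1.1, hx.1.2.ne'⟩, hx.2⟩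
  have h_neg : {x ∈ S | (fderiv ℝ f x).det < 0} ∩ f ⁻¹' {y} = ∅ :=
    eq_empty_of_forall_notMem fun x hx ↦ hy ⟨x, ⟨hx.1.1, hx.1.2.ne⟩, hx.2⟩
  simp [degreeOn, h_pos, h_neg]

variable [FiniteDimensional ℝ E] [MeasurableSpace E] [BorelSpace E]

theorem exists_partition_injOn_of_det_ne_zero
    (hf : ∀ x ∈ S, HasFDerivWithinAt f (f' x) S x) (hf' : ∀ x ∈ S, (f' x).det ≠ 0) :
    ∃ t : ℕ → Set E, Pairwise (Function.onFun Disjoint t) ∧ (∀ n, MeasurableSet (t n)) ∧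
      S ⊆ ⋃ n, t n ∧ ∀ n, InjOn f (S ∩ t n) := by
  have h_radius (A : E →L[ℝ] E) : ∃ r : ℝ≥0, r ≠ 0 ∧
      (A.det ≠ 0 → ∀ s, ApproximatesLinearOn f A s r → InjOn f s) := by
    by_cases hA : A.det = 0
    · exact ⟨1, one_ne_zero, fun h ↦ (h hA).elim⟩
    let A' : E ≃L[ℝ] E := A.toContinuousLinearEquivOfDetNeZero hA
    rcases subsingleton_or_nontrivial E with hE | hE
    · exact ⟨1, one_ne_zero, fun _ s _ ↦ injOn_of_subsingleton f s⟩
    · have h_pos : 0 < ‖(A'.symm : E →L[ℝ] E)‖₊⁻¹ := inv_pos.2 A'.nnnorm_symm_pos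
      exact ⟨_, (half_pos h_pos).ne', fun _ s hs ↦
        ApproximatesLinearOn.injOn (f' := A') hs (.inr (NNReal.half_lt_self h_pos.ne'))⟩
  choose r hr_pos hr using h_radius
  rcases S.eq_empty_or_nonempty with rfl | hS
  · exact ⟨fun _ ↦ ∅, fun _ _ _ ↦ disjoint_bot_left, fun _ ↦ .empty, empty_subset _, by simp⟩
  obtain ⟨t, A, ht_disj, ht_meas, ht_cover, ht_approx, hA⟩ :=
    exists_partition_approximatesLinearOn_of_hasFDerivWithinAt f S f' hf r hr_pos
  refine ⟨t, ht_disj, ht_meas, ht_cover, fun n ↦ hr (A n) ?_ _ (ht_approx n)⟩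
  obtain ⟨x, hx, hAx⟩ := hA hS n
  exact hAx ▸ hf' x hx

theorem measurable_encard_inter_preimage_singleton (hS : MeasurableSet S)
    (hf : ∀ x ∈ S, HasFDerivWithinAt f (f' x) S x) (hf' : ∀ x ∈ S, (f' x).det ≠ 0) :
    Measurable fun y ↦ ((S ∩ f ⁻¹' {y}).encard : ℝ≥0∞) := by
  obtain ⟨t, ht_disj, ht_meas, ht_cover, ht_inj⟩ := exists_partition_injOn_of_det_ne_zero hf hf'
  simp only [encard_inter_preimage_singleton_eq_tsum ht_disj ht_cover ht_inj]
  exact .tsum fun n ↦ measurable_one.indicator <| measurable_image_of_fderivWithin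
    (hS.inter (ht_meas n)) (fun x hx ↦ (hf x hx.1).mono inter_subset_left) (ht_inj n)

variable {μ : Measure E} [μ.IsAddHaarMeasure]

theorem withDensity_encard_inter_preimage_singleton (hS : MeasurableSet S) (hf_meas : Measurable f)
    (hf : ∀ x ∈ S, HasFDerivWithinAt f (f' x) S x) (hf' : ∀ x ∈ S, (f' x).det ≠ 0) :
    μ.withDensity (fun y ↦ (S ∩ f ⁻¹' {y}).encard) =
      ((μ.restrict S).withDensity fun x ↦ ENNReal.ofReal |(f' x).det|).map f := by
  obtain ⟨t, ht_disj, ht_meas, ht_cover, ht_inj⟩ := exists_partition_injOn_of_det_ne_zero hf hf'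
  have hSt_meas (n : ℕ) : MeasurableSet (S ∩ t n) := hS.inter (ht_meas n)
  have hf_sub {n : ℕ} : ∀ x ∈ S ∩ t n, HasFDerivWithinAt f (f' x) (S ∩ t n) x :=
    fun x hx ↦ (hf x hx.1).mono inter_subset_left
  have h_image (n : ℕ) : MeasurableSet (f '' (S ∩ t n)) :=
    measurable_image_of_fderivWithin (hSt_meas n) hf_sub (ht_inj n)
  simp only [encard_inter_preimage_singleton_eq_tsum ht_disj ht_cover ht_inj]
  ext B hB
  have h_iUnion : f ⁻¹' B ∩ S = ⋃ n, S ∩ t n ∩ f ⁻¹' B := by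
    rw [← iUnion_inter, ← inter_iUnion, inter_eq_left.2 ht_cover, inter_comm]
  rw [Measure.map_apply hf_meas hB, withDensity_apply _ hB, withDensity_apply _ (hf_meas hB),
    Measure.restrict_restrict (hf_meas hB), h_iUnion,
    lintegral_iUnion (fun n ↦ (hSt_meas n).inter (hf_meas hB))
      fun m n hmn ↦ (ht_disj hmn).mono (fun _ hx ↦ hx.1.2) fun _ hx ↦ hx.1.2,
    lintegral_tsum fun n ↦ (measurable_one.indicator (h_image n)).aemeasurable]
  refine tsum_congr fun n ↦ ?_
  rw [lintegral_indicator_one (h_image n), Measure.restrict_apply (h_image n),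
    lintegral_abs_det_fderiv_eq_addHaar_image μ ((hSt_meas n).inter (hf_meas hB))
      (fun x hx ↦ (hf_sub x hx.1).mono inter_subset_left) ((ht_inj n).mono inter_subset_left),
    image_inter_preimage]

theorem ae_encard_inter_preimage_singleton_lt_top (hS : MeasurableSet S) (hf_meas : Measurable f)
    (hf : ∀ x ∈ S, HasFDerivWithinAt f (f' x) S x) (hf' : ∀ x ∈ S, (f' x).det ≠ 0)
    (h_int : IntegrableOn (fun x ↦ (f' x).det) S μ) :
    ∀ᵐ y ∂μ, ((S ∩ f ⁻¹' {y}).encard : ℝ≥0∞) < ∞ := by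
  refine ae_lt_top (measurable_encard_inter_preimage_singleton hS hf hf') ?_
  rw [← setLIntegral_univ, ← withDensity_apply _ .univ,
    withDensity_encard_inter_preimage_singleton hS hf_meas hf hf',
    Measure.map_apply hf_meas .univ, preimage_univ, withDensity_apply _ .univ, setLIntegral_univ]
  simpa only [Real.enorm_eq_ofReal_abs] using h_int.2.ne

variable [NormedAddCommGroup F] [NormedSpace ℝ F] {g : E → F}

theorem integrable_ncard_smul (hS : MeasurableSet S) (hf_meas : Measurable f)
    (hf : ∀ x ∈ S, HasFDerivWithinAt f (f' x) S x) (hf' : ∀ x ∈ S, (f' x).det ≠ 0)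
    (hf'_meas : Measurable fun x ↦ (f' x).det) (h_int : IntegrableOn (fun x ↦ (f' x).det) S μ)
    (hg : StronglyMeasurable g) (hg_int : IntegrableOn (fun x ↦ |(f' x).det| • g (f x)) S μ) :
    Integrable (fun y ↦ ((S ∩ f ⁻¹' {y}).ncard : ℝ) • g y) μ := by
  have h_density : Measurable fun x ↦ ENNReal.ofReal |(f' x).det| := by fun_prop
  have h : Integrable g (μ.withDensity fun y ↦ (S ∩ f ⁻¹' {y}).encard) := by
    rw [withDensity_encard_inter_preimage_singleton hS hf_meas hf hf',
      integrable_map_measure hg.aestronglyMeasurable hf_meas.aemeasurable,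
      integrable_withDensity_iff_integrable_smul₀' h_density.aemeasurable (by simp)]
    simpa [IntegrableOn] using hg_int
  rw [integrable_withDensity_iff_integrable_smul₀'
    (measurable_encard_inter_preimage_singleton hS hf hf').aemeasurable
    (ae_encard_inter_preimage_singleton_lt_top hS hf_meas hf hf' h_int)] at h
  convert h using 3 with y
  cases h_card : (S ∩ f ⁻¹' {y}).encard <;> simp [ncard, h_card]

theorem integral_ncard_smul (hS : MeasurableSet S) (hf_meas : Measurable f)
    (hf : ∀ x ∈ S, HasFDerivWithinAt f (f' x) S x) (hf' : ∀ x ∈ S, (f' x).det ≠ 0)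
    (hf'_meas : Measurable fun x ↦ (f' x).det) (h_int : IntegrableOn (fun x ↦ (f' x).det) S μ)
    (hg : StronglyMeasurable g) :
    ∫ y, ((S ∩ f ⁻¹' {y}).ncard : ℝ) • g y ∂μ = ∫ x in S, |(f' x).det| • g (f x) ∂μ := by
  have h_density : Measurable fun x ↦ ENNReal.ofReal |(f' x).det| := by fun_prop
  calc ∫ y, ((S ∩ f ⁻¹' {y}).ncard : ℝ) • g y ∂μ
      = ∫ y, g y ∂μ.withDensity fun y ↦ (S ∩ f ⁻¹' {y}).encard := by
        rw [integral_withDensity_eq_integral_toReal_smul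
          (measurable_encard_inter_preimage_singleton hS hf hf')
          (ae_encard_inter_preimage_singleton_lt_top hS hf_meas hf hf' h_int)]
        congr! 3 with y
        cases h_card : (S ∩ f ⁻¹' {y}).encard <;> simp [ncard, h_card]
    _ = ∫ x in S, |(f' x).det| • g (f x) ∂μ := by
        rw [withDensity_encard_inter_preimage_singleton hS hf_meas hf hf',
          integral_map hf_meas.aemeasurable hg.aestronglyMeasurable,
          integral_withDensity_eq_integral_toReal_smul h_density (by simp)]
        simp

theorem integrableOn_abs_smul {X : Type*} [MeasurableSpace X] {ν : Measure X} {d : X → ℝ}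
    {G : X → F} {T : Set X} (hd : Measurable d) (h : IntegrableOn (fun x ↦ d x • G x) T ν) :
    IntegrableOn (fun x ↦ |d x| • G x) T ν := by
  let σ (x : X) : ℝ := if 0 ≤ d x then 1 else -1
  have hσ : Measurable σ :=
    .ite (measurableSet_le measurable_const hd) measurable_const measurable_const
  have hσ_abs (x : X) : σ x * d x = |d x| := by
    by_cases hx : 0 ≤ d x
    · simp [σ, hx, abs_of_nonneg]
    · simp [σ, hx, abs_of_neg (not_le.1 hx)]
  have h_smul : IntegrableOn (fun x ↦ σ x • d x • G x) T ν :=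
    h.bdd_smul 1 hσ.aestronglyMeasurable
      (.of_forall fun x ↦ by by_cases hx : 0 ≤ d x <;> simp [σ, hx])
  simpa only [smul_smul, hσ_abs] using h_smul

theorem setIntegral_smul_eq_sub {X : Type*} [MeasurableSpace X] {ν : Measure X} {d : X → ℝ}
    {G : X → F} {T : Set X} (hT : MeasurableSet T) (hd : Measurable d)
    (h : IntegrableOn (fun x ↦ d x • G x) T ν) :
    ∫ x in T, d x • G x ∂ν =
      ∫ x in {x ∈ T | 0 < d x}, |d x| • G x ∂ν - ∫ x in {x ∈ T | d x < 0}, |d x| • G x ∂ν := by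
  have h_pos : MeasurableSet {x ∈ T | 0 < d x} := hT.inter (measurableSet_lt measurable_const hd)
  have h_neg : MeasurableSet {x ∈ T | d x < 0} := hT.inter (measurableSet_lt hd measurable_const)
  have h_disj : Disjoint {x ∈ T | 0 < d x} {x ∈ T | d x < 0} :=
    disjoint_left.2 fun x hx hx' ↦ lt_asymm hx.2 hx'.2
  have h_zero : ∀ x ∈ T \ ({x ∈ T | 0 < d x} ∪ {x ∈ T | d x < 0}), d x • G x = 0 := by
    rintro x ⟨hxT, hx⟩
    have h_eq : d x = 0 := by
      by_contra h_ne
      exact hx ((lt_or_gt_of_ne h_ne).symm.imp (⟨hxT, ·⟩) (⟨hxT, ·⟩))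
    rw [h_eq, zero_smul]
  rw [setIntegral_eq_of_subset_of_forall_sdiff_eq_zero hT
      (union_subset (sep_subset _ _) (sep_subset _ _)) h_zero,
    setIntegral_union h_disj h_neg
      (h.mono_set (sep_subset _ _)) (h.mono_set (sep_subset _ _)), sub_eq_add_neg, ← integral_neg]
  congr 1
  · exact setIntegral_congr_fun h_pos fun x hx ↦ by rw [abs_of_pos hx.2]
  · exact setIntegral_congr_fun h_neg fun x hx ↦ by rw [abs_of_neg hx.2, neg_smul, neg_neg]

theorem integrable_degreeOn_smul_and_integral_eq (hS : MeasurableSet S) (hf : ContDiff ℝ 1 f)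
    (h_int : IntegrableOn (fun x ↦ (fderiv ℝ f x).det) S μ) (hg : StronglyMeasurable g)
    (hg_int : IntegrableOn (fun x ↦ (fderiv ℝ f x).det • g (f x)) S μ) :
    Integrable (fun y ↦ (degreeOn f S y : ℝ) • g y) μ ∧
      ∫ y, (degreeOn f S y : ℝ) • g y ∂μ = ∫ x in S, (fderiv ℝ f x).det • g (f x) ∂μ := by
  have hf_meas : Measurable f := hf.continuous.measurable
  have hf_sub {T : Set E} : ∀ x ∈ T, HasFDerivWithinAt f (fderiv ℝ f x) T x :=
    fun x _ ↦ (hf.differentiable one_ne_zero x).hasFDerivAt.hasFDerivWithinAt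
  have h_det : Measurable fun x ↦ (fderiv ℝ f x).det :=
    (ContinuousLinearMap.continuous_det.comp (hf.continuous_fderiv one_ne_zero)).measurable
  let P : Set E := {x ∈ S | 0 < (fderiv ℝ f x).det}
  let N : Set E := {x ∈ S | (fderiv ℝ f x).det < 0}
  have hP_sub : P ⊆ S := sep_subset _ _
  have hN_sub : N ⊆ S := sep_subset _ _
  have hP : MeasurableSet P := hS.inter (measurableSet_lt measurable_const h_det)
  have hN : MeasurableSet N := hS.inter (measurableSet_lt h_det measurable_const)
  have hP_ne : ∀ x ∈ P, (fderiv ℝ f x).det ≠ 0 := fun x hx ↦ hx.2.ne'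
  have hN_ne : ∀ x ∈ N, (fderiv ℝ f x).det ≠ 0 := fun x hx ↦ hx.2.ne
  have h_abs := integrableOn_abs_smul h_det hg_int
  have hP_int := integrable_ncard_smul hP hf_meas hf_sub hP_ne h_det (h_int.mono_set hP_sub) hg
    (h_abs.mono_set hP_sub)
  have hN_int := integrable_ncard_smul hN hf_meas hf_sub hN_ne h_det (h_int.mono_set hN_sub) hg
    (h_abs.mono_set hN_sub)
  have h_sub (y : E) : (degreeOn f S y : ℝ) • g y =
      ((P ∩ f ⁻¹' {y}).ncard : ℝ) • g y - ((N ∩ f ⁻¹' {y}).ncard : ℝ) • g y := by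
    simp [degreeOn, P, N, sub_smul]
  simp only [h_sub]
  refine ⟨hP_int.sub hN_int, ?_⟩
  rw [integral_sub hP_int hN_int, setIntegral_smul_eq_sub hS h_det hg_int,
    integral_ncard_smul hP hf_meas hf_sub hP_ne h_det (h_int.mono_set hP_sub) hg,
    integral_ncard_smul hN hf_meas hf_sub hN_ne h_det (h_int.mono_set hN_sub) hg]

end Degree

section Stokes

open scoped Matrix

section Pullback

variable {D V : Type*} [NormedAddCommGroup D] [NormedSpace ℝ D] [FiniteDimensional ℝ D]
  [MeasurableSpace D] [BorelSpace D] {μ : Measure D} [μ.IsAddHaarMeasure] [NormedAddCommGroup V]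
  [NormedSpace ℝ V]

theorem integral_fderiv_apply_eq_zero {F : D → ℝ} (hF : ContDiff ℝ 1 F)
    (hF_supp : HasCompactSupport F) (a : D) : ∫ p, fderiv ℝ F p a ∂μ = 0 := by
  have h_int : Integrable (fun p ↦ fderiv ℝ F p a) μ :=
    ((hF.continuous_fderiv one_ne_zero).clm_apply continuous_const).integrable_of_hasCompactSupport
      (hF_supp.fderiv_apply ℝ a)
  simpa using integral_mul_fderiv_eq_neg_fderiv_mul_of_integrable (μ := μ) (f := fun _ ↦ (1 : ℝ))
    (v := a) (by simp) (by simpa using h_int)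
    (by simpa using hF.continuous.integrable_of_hasCompactSupport hF_supp)
    (fun _ _ ↦ differentiableAt_const _) fun p _ ↦ hF.differentiable one_ne_zero p

-- Stokes' theorem `∫ d(v^* α) = 0`: the second derivatives of `v` cancel by symmetry.
theorem integral_fderiv_apply_sub_fderiv_apply_eq_zero {v : D → V} (hv : ContDiff ℝ 2 v)
    (hv_supp : HasCompactSupport v) {α : V → StrongDual ℝ V} (hα : ContDiff ℝ 1 α) (a b : D) :
    ∫ p, (fderiv ℝ α (v p) (fderiv ℝ v p a) (fderiv ℝ v p b) -
      fderiv ℝ α (v p) (fderiv ℝ v p b) (fderiv ℝ v p a)) ∂μ = 0 := by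
  have hv_one : ContDiff ℝ 1 v := hv.of_le one_le_two
  have hv' : ContDiff ℝ 1 (fderiv ℝ v) := hv.fderiv_right (by norm_num)
  let G (c : D) (p : D) : ℝ := α (v p) (fderiv ℝ v p c)
  have hG (c : D) : ContDiff ℝ 1 (G c) :=
    (hα.comp hv_one).clm_apply (hv'.clm_apply contDiff_const)
  have hG_supp (c : D) : HasCompactSupport (G c) :=
    (hv_supp.fderiv_apply ℝ c).mono fun p hp h ↦ hp (by simp [G, h])
  have hG_fderiv (c d p : D) : fderiv ℝ (G c) p d =
      fderiv ℝ α (v p) (fderiv ℝ v p d) (fderiv ℝ v p c) +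
        α (v p) (fderiv ℝ (fderiv ℝ v) p d c) := by
    have h_left := (hα.differentiable one_ne_zero (v p)).hasFDerivAt.comp p
      (hv_one.differentiable one_ne_zero p).hasFDerivAt
    have h_right := (hv'.differentiable one_ne_zero p).hasFDerivAt.clm_apply (hasFDerivAt_const c p)
    have h_G : HasFDerivAt (G c) _ p := h_left.clm_apply h_right
    rw [h_G.fderiv]
    simp [add_comm]
  have hG_int (c d : D) : Integrable (fun p ↦ fderiv ℝ (G c) p d) μ :=
    (((hG c).continuous_fderiv one_ne_zero).clm_apply
      continuous_const).integrable_of_hasCompactSupport ((hG_supp c).fderiv_apply ℝ d)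
  calc _ = ∫ p, (fderiv ℝ (G b) p a - fderiv ℝ (G a) p b) ∂μ := by
        refine integral_congr_ae (.of_forall fun p ↦ ?_)
        have h_symm := (hv.contDiffAt (x := p)).isSymmSndFDerivAt (by simp) a b
        simp only [hG_fderiv, h_symm, add_sub_add_right_eq_sub]
    _ = 0 := by
        rw [integral_sub (hG_int b a) (hG_int a b),
          integral_fderiv_apply_eq_zero (hG b) (hG_supp b),
          integral_fderiv_apply_eq_zero (hG a) (hG_supp a), sub_zero]

end Pullback

theorem apply_mul_dotProduct_cross_sub {R : Type*} [CommRing R] (L : (Fin 3 → R) →ₗ[R] R)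
    (a v x y : Fin 3 → R) :
    L x * (a ⬝ᵥ v ⨯₃ y) - L y * (a ⬝ᵥ v ⨯₃ x) = L v * (a ⬝ᵥ x ⨯₃ y) - L a * (v ⬝ᵥ x ⨯₃ y) := by
  rw [L.pi_apply_eq_sum_univ x, L.pi_apply_eq_sum_univ y, L.pi_apply_eq_sum_univ v,
    L.pi_apply_eq_sum_univ a]
  simp only [dotProduct, cross_apply, Fin.sum_univ_three, Matrix.cons_val, smul_eq_mul]
  ring

variable {u : ℝ × ℝ → Fin 3 → ℝ}

/-- The area vector `u_x ∧ u_y` of the parametrised surface `u`. -/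
noncomputable def areaNormal (u : ℝ × ℝ → Fin 3 → ℝ) (p : ℝ × ℝ) : Fin 3 → ℝ :=
  pderivX u p ⨯₃ pderivY u p

theorem areaNormal_of_notMem_tsupport {p : ℝ × ℝ} (hp : p ∉ tsupport u) : areaNormal u p = 0 := by
  simp [areaNormal, pderivX, fderiv_of_notMem_tsupport ℝ hp]

theorem continuous_areaNormal (hu : ContDiff ℝ 1 u) : Continuous (areaNormal u) := by
  have hu' := hu.continuous_fderiv one_ne_zero
  have hX : Continuous (pderivX u) := hu'.clm_apply continuous_const
  have hY : Continuous (pderivY u) := hu'.clm_apply continuous_const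
  unfold areaNormal
  simp only [cross_apply]
  fun_prop

-- Stokes' theorem for the one-form `ψ(z) a · (z ∧ dz)` on `ℝ³`.
theorem integral_fderiv_add_two_mul_mul_dotProduct_areaNormal (hu : ContDiff ℝ 2 u)
    (hu_supp : HasCompactSupport u) {ψ : (Fin 3 → ℝ) → ℝ} (hψ : ContDiff ℝ 1 ψ)
    (a : Fin 3 → ℝ) :
    ∫ p, (fderiv ℝ ψ (u p) (u p) + 2 * ψ (u p)) * (a ⬝ᵥ areaNormal u p) =
      ∫ p, fderiv ℝ ψ (u p) a * (u p ⬝ᵥ areaNormal u p) := by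
  have hu_one := hu.of_le one_le_two
  have hu_cont := hu.continuous
  have hN := continuous_areaNormal hu_one
  have hψ_cont := hψ.continuous
  let B : (Fin 3 → ℝ) →L[ℝ] StrongDual ℝ (Fin 3 → ℝ) :=
    (crossProduct.compr₂ (dotProductBilin ℝ ℝ a)).toContinuousBilinearMap
  have hB (z k : Fin 3 → ℝ) : B z k = a ⬝ᵥ z ⨯₃ k := rfl
  have hα (z h k : Fin 3 → ℝ) : fderiv ℝ (fun z ↦ ψ z • B z) z h k =
      fderiv ℝ ψ z h * (a ⬝ᵥ z ⨯₃ k) + ψ z * (a ⬝ᵥ h ⨯₃ k) := by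
    rw [((hψ.differentiable one_ne_zero z).hasFDerivAt.fun_smul B.hasFDerivAt).fderiv]
    simp [hB, add_comm]
  have h_stokes : ∫ p, (fderiv ℝ (fun z ↦ ψ z • B z) (u p) (pderivX u p) (pderivY u p) -
      fderiv ℝ (fun z ↦ ψ z • B z) (u p) (pderivY u p) (pderivX u p)) = 0 :=
    integral_fderiv_apply_sub_fderiv_apply_eq_zero hu hu_supp (hψ.smul B.contDiff) (1, 0) (0, 1)
  rw [← sub_eq_zero, ← integral_sub, ← h_stokes]
  · refine integral_congr_ae (.of_forall fun p ↦ ?_)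
    have h_cramer : fderiv ℝ ψ (u p) (pderivX u p) * (a ⬝ᵥ u p ⨯₃ pderivY u p) -
        fderiv ℝ ψ (u p) (pderivY u p) * (a ⬝ᵥ u p ⨯₃ pderivX u p) =
        fderiv ℝ ψ (u p) (u p) * (a ⬝ᵥ areaNormal u p) -
          fderiv ℝ ψ (u p) a * (u p ⬝ᵥ areaNormal u p) :=
      apply_mul_dotProduct_cross_sub (fderiv ℝ ψ (u p)).toLinearMap a (u p) _ _
    have h_anti : a ⬝ᵥ pderivY u p ⨯₃ pderivX u p = -(a ⬝ᵥ areaNormal u p) := by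
      rw [← cross_anticomm, dotProduct_neg, areaNormal]
    simp only [hα, h_anti, ← areaNormal.eq_1]
    linear_combination -h_cramer
  · exact Continuous.integrable_of_hasCompactSupport (by fun_prop)
      (.intro hu_supp fun p hp ↦ by simp [areaNormal_of_notMem_tsupport hp])
  · exact Continuous.integrable_of_hasCompactSupport (by fun_prop)
      (.intro hu_supp fun p hp ↦ by simp [areaNormal_of_notMem_tsupport hp])

/-- The product of Lebesgue measure on `(0, 1]` with Lebesgue measure on `ℝ²`, over which the cone
on a surface is parametrised. -/
noncomputable abbrev slabMeasure : Measure (ℝ × ℝ × ℝ) :=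
  (volume.restrict (Ioc 0 1)).prod volume

theorem integrable_slabMeasure {F : Type*} [NormedAddCommGroup F] {f : ℝ × ℝ × ℝ → F}
    (hf : Continuous f) {K : Set (ℝ × ℝ)} (hK : IsCompact K)
    (hfK : ∀ q : ℝ × ℝ × ℝ, q.2 ∉ K → f q = 0) : Integrable f slabMeasure := by
  have h_compact : IntegrableOn f (Icc 0 1 ×ˢ K) :=
    hf.continuousOn.integrableOn_compact (isCompact_Icc.prod hK)
  have h_slab : IntegrableOn f (Ioc 0 1 ×ˢ univ) :=
    h_compact.of_forall_sdiff_eq_zero (measurableSet_Ioc.prod .univ) fun q hq ↦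
      hfK q fun hqK ↦ hq.2 ⟨Ioc_subset_Icc_self hq.1.1, hqK⟩
  rwa [IntegrableOn, Measure.volume_eq_prod, ← Measure.prod_restrict, Measure.restrict_univ]
    at h_slab

theorem setIntegral_Ioc_sq_mul_fderiv_add_eq {V : Type*} [NormedAddCommGroup V] [NormedSpace ℝ V]
    {φ : V → ℝ} (hφ : ContDiff ℝ 1 φ) (z : V) :
    ∫ t in Ioc 0 1, (t ^ 2 * fderiv ℝ φ (t • z) z + 2 * t * φ (t • z)) = φ z := by
  have hφ_cont := hφ.continuous
  have h_deriv (t : ℝ) : HasDerivAt (fun t : ℝ ↦ t ^ 2 * φ (t • z))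
      (t ^ 2 * fderiv ℝ φ (t • z) z + 2 * t * φ (t • z)) t := by
    have h_ray : HasDerivAt (fun t : ℝ ↦ t • z) z t := by
      simpa using (hasDerivAt_id t).smul_const z
    have h_comp := (hφ.differentiable one_ne_zero (t • z)).hasFDerivAt.comp_hasDerivAt t h_ray
    refine ((hasDerivAt_pow 2 t).mul h_comp).congr_deriv ?_
    simp
    ring
  rw [← intervalIntegral.integral_of_le zero_le_one,
    intervalIntegral.integral_eq_sub_of_hasDerivAt (fun t _ ↦ h_deriv t)
      (Continuous.intervalIntegrable (by fun_prop) _ _)]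
  simp

theorem integral_fderiv_smul_add_mul_dotProduct_areaNormal (hu : ContDiff ℝ 2 u)
    (hu_supp : HasCompactSupport u) {φ : (Fin 3 → ℝ) → ℝ} (hφ : ContDiff ℝ 1 φ)
    (a : Fin 3 → ℝ) (t : ℝ) :
    ∫ p, (t ^ 2 * fderiv ℝ φ (t • u p) (u p) + 2 * t * φ (t • u p)) * (a ⬝ᵥ areaNormal u p) =
      ∫ p, t ^ 2 * (u p ⬝ᵥ areaNormal u p) * fderiv ℝ φ (t • u p) a := by
  have hψ : ContDiff ℝ 1 fun z ↦ φ (t • z) := hφ.fun_comp (contDiff_const_smul t)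
  have hψ_fderiv (z h : Fin 3 → ℝ) :
      fderiv ℝ (fun z ↦ t * φ (t • z)) z h = t ^ 2 * fderiv ℝ φ (t • z) h := by
    rw [fderiv_const_mul (hψ.differentiable one_ne_zero z), fderiv_comp_smul]
    simp
    ring
  have h_stokes := integral_fderiv_add_two_mul_mul_dotProduct_areaNormal hu hu_supp
    (contDiff_const.mul hψ : ContDiff ℝ 1 fun z ↦ t * φ (t • z)) a
  simp only [hψ_fderiv] at h_stokes
  simpa only [← mul_assoc, mul_right_comm] using h_stokes

theorem integral_mul_dotProduct_areaNormal (hu : ContDiff ℝ 2 u) (hu_supp : HasCompactSupport u)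
    {φ : (Fin 3 → ℝ) → ℝ} (hφ : ContDiff ℝ 1 φ) (a : Fin 3 → ℝ) :
    ∫ p, φ (u p) * (a ⬝ᵥ areaNormal u p) =
      ∫ q, q.1 ^ 2 * (u q.2 ⬝ᵥ areaNormal u q.2) * fderiv ℝ φ (q.1 • u q.2) a ∂slabMeasure := by
  have hu_cont := hu.continuous
  have hN := continuous_areaNormal (hu.of_le one_le_two)
  have hφ_cont := hφ.continuous
  have h_left : Integrable (fun q : ℝ × ℝ × ℝ ↦ (q.1 ^ 2 * fderiv ℝ φ (q.1 • u q.2) (u q.2) +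
      2 * q.1 * φ (q.1 • u q.2)) * (a ⬝ᵥ areaNormal u q.2)) slabMeasure :=
    integrable_slabMeasure (by fun_prop) hu_supp fun q hq ↦ by
      simp [areaNormal_of_notMem_tsupport hq]
  have h_right : Integrable (fun q : ℝ × ℝ × ℝ ↦ q.1 ^ 2 * (u q.2 ⬝ᵥ areaNormal u q.2) *
      fderiv ℝ φ (q.1 • u q.2) a) slabMeasure :=
    integrable_slabMeasure (by fun_prop) hu_supp fun q hq ↦ by
      simp [areaNormal_of_notMem_tsupport hq]
  calc ∫ p, φ (u p) * (a ⬝ᵥ areaNormal u p)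
      = ∫ p, ∫ t in Ioc 0 1, (t ^ 2 * fderiv ℝ φ (t • u p) (u p) + 2 * t * φ (t • u p)) *
          (a ⬝ᵥ areaNormal u p) := by
        simp only [integral_mul_const, setIntegral_Ioc_sq_mul_fderiv_add_eq hφ]
    _ = ∫ t in Ioc 0 1, ∫ p, t ^ 2 * (u p ⬝ᵥ areaNormal u p) * fderiv ℝ φ (t • u p) a := by
        simp only [← integral_fderiv_smul_add_mul_dotProduct_areaNormal hu hu_supp hφ]
        exact (integral_integral_swap h_left).symm
    _ = _ := (integral_prod _ h_right).symm

end Stokes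

section Cone

open scoped Matrix

variable {u : ℝ × ℝ → Fin 3 → ℝ}

/-- The parametrisation `(t, x, y) ↦ t u(x, y)` of the cone with vertex `0` over the surface `u`. -/
noncomputable def coneMap (u : ℝ × ℝ → Fin 3 → ℝ) (q : Fin 3 → ℝ) : Fin 3 → ℝ :=
  q 0 • u (q 1, q 2)

theorem contDiff_coneMap {n : WithTop ℕ∞} (hu : ContDiff ℝ n u) : ContDiff ℝ n (coneMap u) := by
  unfold coneMap
  fun_prop

theorem fderiv_coneMap_apply {q : Fin 3 → ℝ} (hu : DifferentiableAt ℝ u (q 1, q 2))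
    (w : Fin 3 → ℝ) : fderiv ℝ (coneMap u) q w =
      w 0 • u (q 1, q 2) + q 0 • (w 1 • pderivX u (q 1, q 2) + w 2 • pderivY u (q 1, q 2)) := by
  have h_base : HasFDerivAt (fun q : Fin 3 → ℝ ↦ (q 1, q 2)) _ q :=
    (hasFDerivAt_apply (𝕜 := ℝ) 1 q).prodMk (hasFDerivAt_apply 2 q)
  have h_cone : HasFDerivAt (coneMap u) _ q :=
    (hasFDerivAt_apply (𝕜 := ℝ) 0 q).smul (hu.hasFDerivAt.comp q h_base)
  have h_fderiv : fderiv ℝ u (q 1, q 2) (w 1, w 2) =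
      w 1 • pderivX u (q 1, q 2) + w 2 • pderivY u (q 1, q 2) := by
    rw [pderivX, pderivY, ← map_smul, ← map_smul, ← map_add]
    simp
  rw [h_cone.fderiv]
  simp [h_fderiv, add_comm]

theorem det_fderiv_coneMap {q : Fin 3 → ℝ} (hu : DifferentiableAt ℝ u (q 1, q 2)) :
    (fderiv ℝ (coneMap u) q).det = q 0 ^ 2 * (u (q 1, q 2) ⬝ᵥ areaNormal u (q 1, q 2)) := by
  rw [ContinuousLinearMap.det, ← LinearMap.det_toMatrix', Matrix.det_fin_three]
  simp [LinearMap.toMatrix'_apply, fderiv_coneMap_apply hu, areaNormal, cross_apply, dotProduct,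
    Fin.sum_univ_three]
  ring

/-- The number of times the cone over the closed surface `u` winds around a point: the degree of
`coneMap u` on `(0, 1] × ℝ²`. -/
noncomputable def coneDegree (u : ℝ × ℝ → Fin 3 → ℝ) : (Fin 3 → ℝ) → ℤ :=
  degreeOn (coneMap u) {q | q 0 ∈ Ioc 0 1}

theorem hasCompactSupport_coneDegree (hu : ContDiff ℝ 1 u) (hu_supp : HasCompactSupport u) :
    HasCompactSupport (coneDegree u) := by
  have hu_cont := hu.continuous
  have h_image : IsCompact ((fun q : ℝ × ℝ × ℝ ↦ q.1 • u q.2) '' (Icc 0 1 ×ˢ tsupport u)) :=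
    (isCompact_Icc.prod hu_supp).image (by fun_prop)
  refine .intro h_image fun y hy ↦ degreeOn_of_notMem_image ?_
  rintro ⟨q, ⟨hq, hq_det⟩, rfl⟩
  refine hy ⟨(q 0, q 1, q 2), ⟨Ioc_subset_Icc_self hq, not_not.1 fun h_notMem ↦ hq_det ?_⟩, rfl⟩
  rw [det_fderiv_coneMap (hu.differentiable one_ne_zero _),
    areaNormal_of_notMem_tsupport h_notMem, dotProduct_zero, mul_zero]

theorem measurePreserving_restrict_slabMeasure :
    MeasurePreserving (fun q : Fin 3 → ℝ ↦ (q 0, q 1, q 2))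
      (volume.restrict {q | q 0 ∈ Ioc 0 1}) slabMeasure := by
  have h_split : MeasurePreserving (fun q : Fin 3 → ℝ ↦ (q 0, q 1, q 2)) :=
    ((MeasurePreserving.id volume).prod (volume_preserving_piFinTwo fun _ ↦ ℝ)).comp
      (volume_preserving_piFinSuccAbove (fun _ : Fin 3 ↦ ℝ) 0)
  have h_slab := h_split.restrict_preimage (s := Ioc 0 1 ×ˢ univ) (measurableSet_Ioc.prod .univ)
  rwa [Measure.volume_eq_prod, ← Measure.prod_restrict, Measure.restrict_univ, prod_univ,
    ← preimage_comp] at h_slab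

theorem integrable_coneDegree_mul_and_integral_eq (hu : ContDiff ℝ 1 u)
    (hu_supp : HasCompactSupport u) {g : (Fin 3 → ℝ) → ℝ} (hg : Continuous g) :
    Integrable (fun y ↦ coneDegree u y * g y) ∧
      ∫ y, coneDegree u y * g y =
        ∫ q, q.1 ^ 2 * (u q.2 ⬝ᵥ areaNormal u q.2) * g (q.1 • u q.2) ∂slabMeasure := by
  have hu_cont := hu.continuous
  have hN := continuous_areaNormal hu
  have h_mp := measurePreserving_restrict_slabMeasure
  have h_det (q : Fin 3 → ℝ) := det_fderiv_coneMap (hu.differentiable one_ne_zero (q 1, q 2))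
  let T : Set (Fin 3 → ℝ) := {q | q 0 ∈ Ioc 0 1}
  have h_int {f : (Fin 3 → ℝ) → ℝ} (hf : Continuous f) :
      Integrable (fun q : ℝ × ℝ × ℝ ↦ q.1 ^ 2 * (u q.2 ⬝ᵥ areaNormal u q.2) * f (q.1 • u q.2))
        slabMeasure :=
    integrable_slabMeasure (by fun_prop) hu_supp fun q hq ↦ by
      simp [areaNormal_of_notMem_tsupport hq]
  have h_cone_int {f : (Fin 3 → ℝ) → ℝ} (hf : Continuous f) :
      IntegrableOn (fun q ↦ (fderiv ℝ (coneMap u) q).det * f (coneMap u q)) T := by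
    simp only [h_det]
    exact h_mp.integrable_comp_of_integrable (h_int hf)
  have h_degree := integrable_degreeOn_smul_and_integral_eq (S := T)
    (measurableSet_Ioc.preimage (measurable_pi_apply 0)) (contDiff_coneMap hu)
    (by simpa using h_cone_int (f := fun _ ↦ 1) continuous_const) hg.stronglyMeasurable
    (h_cone_int hg)
  refine ⟨h_degree.1, h_degree.2.trans ?_⟩
  rw [← h_mp.map_eq, integral_map h_mp.aemeasurable
    (h_mp.map_eq ▸ (h_int hg).aestronglyMeasurable)]
  simp only [h_det, smul_eq_mul]
  rfl

theorem integrable_coneDegree (hu : ContDiff ℝ 1 u) (hu_supp : HasCompactSupport u) :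
    Integrable fun y ↦ (coneDegree u y : ℝ) := by
  simpa using (integrable_coneDegree_mul_and_integral_eq hu hu_supp
    (g := fun _ ↦ 1) continuous_const).1

theorem hasDistribDeriv_coneDegree (hu : ContDiff ℝ 2 u) (hu_supp : HasCompactSupport u) :
    HasDistribDeriv volume (fun y ↦ (coneDegree u y : ℝ)) volume u fun p ↦
      -(dotProductBilin ℝ ℝ (areaNormal u p)).toContinuousLinearMap := by
  intro φ hφ _ a
  rw [(integrable_coneDegree_mul_and_integral_eq (hu.of_le one_le_two) hu_supp
    ((hφ.continuous_fderiv one_ne_zero).clm_apply continuous_const)).2,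
    ← integral_mul_dotProduct_areaNormal hu hu_supp hφ, ← integral_neg]
  refine integral_congr_ae (.of_forall fun p ↦ ?_)
  simp [dotProduct_comm]

theorem integral_dotProduct_areaNormal_eq (hu : ContDiff ℝ 1 u) (hu_supp : HasCompactSupport u) :
    ∫ p, u p ⬝ᵥ areaNormal u p = 3 * ∫ y, (coneDegree u y : ℝ) := by
  have h_degree := (integrable_coneDegree_mul_and_integral_eq hu hu_supp
    (g := fun _ ↦ 1) continuous_const).2
  simp only [mul_one] at h_degree
  rw [h_degree, integral_prod_mul (fun t : ℝ ↦ t ^ 2) fun p ↦ u p ⬝ᵥ areaNormal u p,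
    ← intervalIntegral.integral_of_le zero_le_one, integral_pow]
  norm_num
  ring

-- Moved to `EuclideanSpace` because `Fin 3 → ℝ` carries the supremum norm.
theorem hasDistribDeriv_coneDegree_ofLp (hu : ContDiff ℝ 2 u) (hu_supp : HasCompactSupport u) :
    HasDistribDeriv volume (fun y : EuclideanSpace ℝ (Fin 3) ↦ (coneDegree u y.ofLp : ℝ)) volume
      (fun p ↦ WithLp.toLp 2 (u p)) fun p ↦ -innerSL ℝ (WithLp.toLp 2 (areaNormal u p)) := by
  have h := (hasDistribDeriv_coneDegree hu hu_supp).map_continuousLinearEquiv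
    (EuclideanSpace.equiv (Fin 3) ℝ).symm
  have h_vol : volume.map (EuclideanSpace.equiv (Fin 3) ℝ).symm = volume :=
    (EuclideanSpace.volume_preserving_symm_measurableEquiv_toLp (Fin 3)).symm.map_eq
  have h_form (p : ℝ × ℝ) : -innerSL ℝ (WithLp.toLp 2 (areaNormal u p)) =
      (-(dotProductBilin ℝ ℝ (areaNormal u p)).toContinuousLinearMap).comp
        (EuclideanSpace.equiv (Fin 3) ℝ : EuclideanSpace ℝ (Fin 3) →L[ℝ] Fin 3 → ℝ) :=
    ContinuousLinearMap.ext fun w ↦ by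
      simp only [neg_apply, innerSL_apply_apply, EuclideanSpace.inner_eq_star_dotProduct]
      exact congrArg _ (dotProduct_comm _ _)
  rw [h_vol] at h
  simp only [h_form]
  exact h

theorem isoperimetricConst_euclideanSpace_fin_three_pow_three :
    isoperimetricConst (volume : Measure (EuclideanSpace ℝ (Fin 3))) ^ 3 =
      ENNReal.ofReal (36 * π) := by
  rw [isoperimetricConst, finrank_euclideanSpace_fin, mul_pow,
    ENNReal.rpow_inv_natCast_pow three_ne_zero, EuclideanSpace.volume_ball_fin_three,
    ENNReal.ofReal_one, one_pow, one_mul, ← ENNReal.ofReal_natCast, ← ENNReal.ofReal_pow (by simp),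
    ← ENNReal.ofReal_mul (by simp)]
  congr 1
  norm_num
  ring

theorem isoperimetricConst_mul_lintegral_coneDegree_rpow_le (hu : ContDiff ℝ 2 u)
    (hu_supp : HasCompactSupport u) :
    isoperimetricConst (volume : Measure (EuclideanSpace ℝ (Fin 3))) *
        (∫⁻ y, ‖(coneDegree u y : ℝ)‖ₑ) ^ (2 / 3 : ℝ) ≤
      ∫⁻ p, ‖WithLp.toLp 2 (areaNormal u p)‖ₑ := by
  have hu_one := hu.of_le one_le_two
  have hN := continuous_areaNormal hu_one
  have h_vol := EuclideanSpace.volume_preserving_symm_measurableEquiv_toLp (Fin 3)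
  have h_emb := (MeasurableEquiv.toLp 2 (Fin 3 → ℝ)).symm.measurableEmbedding
  have h_int := integrable_coneDegree hu_one hu_supp
  have hq : NNReal.HolderConjugate (finrank ℝ (EuclideanSpace ℝ (Fin 3))) (3 / 2) := by
    rw [finrank_euclideanSpace_fin, NNReal.holderConjugate_iff]
    norm_num
  have h_supp : HasCompactSupport fun y : EuclideanSpace ℝ (Fin 3) ↦
      (coneDegree u y.ofLp : ℝ) :=
    ((hasCompactSupport_coneDegree hu_one hu_supp).comp_left Int.cast_zero).comp_homeomorph
      (EuclideanSpace.equiv (Fin 3) ℝ).toHomeomorph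
  have hN_int : Integrable fun p ↦ -innerSL ℝ (WithLp.toLp 2 (areaNormal u p)) :=
    Continuous.integrable_of_hasCompactSupport (by fun_prop)
      (.intro hu_supp fun p hp ↦ by simp [areaNormal_of_notMem_tsupport hp])
  have h_le := (hasDistribDeriv_coneDegree_ofLp hu hu_supp).isoperimetricConst_mul_lintegral_rpow_le
    hq ((h_vol.integrable_comp_emb h_emb).2 h_int).locallyIntegrable h_supp
    ((PiLp.continuous_toLp 2 _).comp hu.continuous).aemeasurable hN_int
  have h_lintegral : ∫⁻ y : EuclideanSpace ℝ (Fin 3), ‖(coneDegree u y.ofLp : ℝ)‖ₑ =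
      ∫⁻ y, ‖(coneDegree u y : ℝ)‖ₑ :=
    h_vol.lintegral_comp_emb h_emb fun y ↦ ‖(coneDegree u y : ℝ)‖ₑ
  have h_enorm (x : EuclideanSpace ℝ (Fin 3)) : ‖-innerSL ℝ x‖ₑ = ‖x‖ₑ := by
    rw [enorm_neg, ← ofReal_norm, innerSL_apply_norm, ofReal_norm]
  simpa [h_lintegral, h_enorm] using h_le

-- The isoperimetric inequality for the closed surface `u`.
theorem four_mul_pi_mul_sq_integral_le (hu : ContDiff ℝ 2 u) (hu_supp : HasCompactSupport u) :
    4 * π * (∫ p, u p ⬝ᵥ areaNormal u p) ^ 2 ≤ (∫ p, ‖WithLp.toLp 2 (areaNormal u p)‖) ^ 3 := by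
  have hu_one := hu.of_le one_le_two
  have hN := continuous_areaNormal hu_one
  have hN_int : Integrable fun p ↦ WithLp.toLp 2 (areaNormal u p) :=
    Continuous.integrable_of_hasCompactSupport (by fun_prop)
      (.intro hu_supp fun p hp ↦ by simp [areaNormal_of_notMem_tsupport hp])
  have h_int := integrable_coneDegree hu_one hu_supp
  have h_iso : 36 * π * (∫ y, ‖(coneDegree u y : ℝ)‖) ^ 2 ≤
      (∫ p, ‖WithLp.toLp 2 (areaNormal u p)‖) ^ 3 := by
    have h_cube := pow_le_pow_left₀ zero_le
      (isoperimetricConst_mul_lintegral_coneDegree_rpow_le hu hu_supp) 3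
    rw [mul_pow, isoperimetricConst_euclideanSpace_fin_three_pow_three, ← ENNReal.rpow_mul_natCast,
      ← ofReal_integral_norm_eq_lintegral_enorm h_int,
      ← ofReal_integral_norm_eq_lintegral_enorm hN_int] at h_cube
    have h_exp : (2 / 3 : ℝ) * (3 : ℕ) = (2 : ℕ) := by norm_num
    rwa [h_exp, ENNReal.rpow_natCast, ← ENNReal.ofReal_pow (by positivity),
      ← ENNReal.ofReal_pow (by positivity), ← ENNReal.ofReal_mul (by positivity),
      ENNReal.ofReal_le_ofReal_iff (by positivity)] at h_cube
  calc 4 * π * (∫ p, u p ⬝ᵥ areaNormal u p) ^ 2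
      = 36 * π * (∫ y, (coneDegree u y : ℝ)) ^ 2 := by
        rw [integral_dotProduct_areaNormal_eq hu_one hu_supp]
        ring
    _ ≤ 36 * π * (∫ y, ‖(coneDegree u y : ℝ)‖) ^ 2 := by
        rw [← sq_abs, ← Real.norm_eq_abs]
        gcongr
        exact norm_integral_le_integral_norm _
    _ ≤ _ := h_iso

end Cone

section Energy

open scoped Matrix

variable {Ω : Set (ℝ × ℝ)} {u : ℝ × ℝ → Fin 3 → ℝ}

theorem norm_toLp_cross_le (a b : Fin 3 → ℝ) :
    ‖WithLp.toLp 2 (a ⨯₃ b)‖ ≤ (dot3 a a + dot3 b b) / 2 := by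
  have h_lagrange : ‖WithLp.toLp 2 (a ⨯₃ b)‖ ^ 2 = dot3 a a * dot3 b b - dot3 a b ^ 2 := by
    simp only [EuclideanSpace.real_norm_sq_eq, Fin.sum_univ_three, dot3, cross_apply,
      Matrix.cons_val]
    ring
  have h_nonneg (v : Fin 3 → ℝ) : 0 ≤ dot3 v v := Finset.sum_nonneg fun i _ ↦ mul_self_nonneg _
  refine le_of_sq_le_sq ?_ (by linarith [h_nonneg a, h_nonneg b])
  nlinarith [sq_nonneg (dot3 a b), sq_nonneg (dot3 a a - dot3 b b)]

theorem vol_eq_integral (hΩ : tsupport u ⊆ Ω) : vol Ω u = ∫ p, u p ⬝ᵥ areaNormal u p :=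
  setIntegral_eq_integral_of_forall_compl_eq_zero fun p hp ↦ by
    have h_zero := congrArg (u p ⬝ᵥ ·) (areaNormal_of_notMem_tsupport fun h ↦ hp (hΩ h))
    exact h_zero.trans (dotProduct_zero _)

theorem dirEnergy_eq_integral (hΩ : tsupport u ⊆ Ω) :
    dirEnergy Ω u =
      ∫ p, (dot3 (pderivX u p) (pderivX u p) + dot3 (pderivY u p) (pderivY u p)) :=
  setIntegral_eq_integral_of_forall_compl_eq_zero fun p hp ↦ by
    simp [pderivX, pderivY, fderiv_of_notMem_tsupport ℝ fun h ↦ hp (hΩ h), dot3]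

theorem integral_norm_areaNormal_le (hu : ContDiff ℝ 1 u) (hu_supp : HasCompactSupport u)
    (hΩ : tsupport u ⊆ Ω) :
    ∫ p, ‖WithLp.toLp 2 (areaNormal u p)‖ ≤ dirEnergy Ω u / 2 := by
  have hN := continuous_areaNormal hu
  rw [dirEnergy_eq_integral hΩ, ← integral_div]
  refine integral_mono ?_ ?_ fun p ↦ norm_toLp_cross_le _ _
  · exact Continuous.integrable_of_hasCompactSupport (by fun_prop)
      (.intro hu_supp fun p hp ↦ by simp [areaNormal_of_notMem_tsupport hp])
  · refine Continuous.integrable_of_hasCompactSupport ?_ (.intro hu_supp fun p hp ↦ by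
      simp [pderivX, pderivY, fderiv_of_notMem_tsupport ℝ hp, dot3])
    unfold dot3 pderivX pderivY
    fun_prop

theorem thirtyTwo_mul_pi_mul_vol_sq_le (hu : ContDiff ℝ 2 u) (hu_supp : HasCompactSupport u)
    (hΩ : tsupport u ⊆ Ω) : 32 * π * vol Ω u ^ 2 ≤ dirEnergy Ω u ^ 3 := by
  have h_area := integral_norm_areaNormal_le (hu.of_le one_le_two) hu_supp hΩ
  calc 32 * π * vol Ω u ^ 2 = 8 * (4 * π * (∫ p, u p ⬝ᵥ areaNormal u p) ^ 2) := by
        rw [vol_eq_integral hΩ]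
        ring
    _ ≤ 8 * (∫ p, ‖WithLp.toLp 2 (areaNormal u p)‖) ^ 3 := by
        gcongr
        exact four_mul_pi_mul_sq_integral_le hu hu_supp
    _ ≤ 8 * (dirEnergy Ω u / 2) ^ 3 := by gcongr
    _ = dirEnergy Ω u ^ 3 := by ring

end Energy

theorem positivity_in_small_ball_general {Ω : Set (ℝ × ℝ)} {H δ : ℝ} (hH : 0 < H)
    {u : ℝ × ℝ → Fin 3 → ℝ} (hu : ContDiff ℝ 2 u) (hu_supp : HasCompactSupport u)
    (hΩ : tsupport u ⊆ Ω) (h_pos : 0 < dnorm Ω u) (h_lt : dnorm Ω u < rPW H δ) :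
    0 < Dfun Ω H δ u := by
  have h_vol := thirtyTwo_mul_pi_mul_vol_sq_le hu hu_supp hΩ
  have h_energy : 0 < dirEnergy Ω u := sqrt_pos.1 h_pos
  have h_sq : dnorm Ω u ^ 2 = dirEnergy Ω u := sq_sqrt h_energy.le
  have h_mul_lt : H * dnorm Ω u < 2 * √(2 * π) * δ := by
    rwa [rPW, lt_div_iff₀' hH] at h_lt
  have hδ : 0 < δ := pos_of_mul_pos_right ((mul_pos hH h_pos).trans h_mul_lt) (by positivity)
  have h_ball : H ^ 2 * dirEnergy Ω u < 8 * π * δ ^ 2 :=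
    calc H ^ 2 * dirEnergy Ω u = (H * dnorm Ω u) ^ 2 := by rw [mul_pow, h_sq]
      _ < (2 * √(2 * π) * δ) ^ 2 := by gcongr
      _ = 8 * π * δ ^ 2 := by
        rw [mul_pow, mul_pow, sq_sqrt (by positivity)]
        ring
  have h_abs : |2 * H * vol Ω u| < δ * dirEnergy Ω u := by
    refine abs_lt_of_sq_lt_sq (lt_of_mul_lt_mul_left ?_ (by positivity : 0 ≤ 8 * π)) (by positivity)
    calc 8 * π * (2 * H * vol Ω u) ^ 2 = H ^ 2 * (32 * π * vol Ω u ^ 2) := by ring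
      _ ≤ H ^ 2 * dirEnergy Ω u ^ 3 := by gcongr
      _ = H ^ 2 * dirEnergy Ω u * dirEnergy Ω u ^ 2 := by ring
      _ < 8 * π * δ ^ 2 * dirEnergy Ω u ^ 2 := by gcongr
      _ = 8 * π * (δ * dirEnergy Ω u) ^ 2 := by ring
  rw [Dfun]
  linarith [neg_lt_of_abs_lt h_abs]

/-- If `0 < ‖u‖ < r(δ)` then `D_δ(u) > 0`; in particular, if `0 < ‖u‖ < r(1)`
then `D(u) > 0`. -/
theorem positivity_in_small_ball (Ω : Set (ℝ × ℝ)) (hΩ : IsOpen Ω)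
    (hΩb : Bornology.IsBounded Ω) (H : ℝ) (hH : 0 < H) (δ : ℝ) (hδ : 0 < δ)
    (u : ℝ × ℝ → Fin 3 → ℝ) (hu : IsAdmissible Ω u) :
    (0 < dnorm Ω u → dnorm Ω u < rPW H δ → 0 < Dfun Ω H δ u) ∧
    (0 < dnorm Ω u → dnorm Ω u < rPW H 1 → 0 < Dfun Ω H 1 u) := by
  have hu_two : ContDiff ℝ 2 u := contDiff_infty.1 hu.1 2
  exact ⟨positivity_in_small_ball_general hH hu_two hu.2.1 hu.2.2,
    positivity_in_small_ball_general hH hu_two hu.2.1 hu.2.2⟩
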